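/- There exists ε_* > 0 such that for every ε ∈ (0, ε_*] and every normalised self-similar profile φ_ε for K_ε, the function x ↦ x^{−2} ∫₀^x ∫_{x−y}^∞ y K_ε(y,z) φ_ε(y) φ_ε(z) dz dy (which coincides with φ_ε almost everywhere) is differentiable at every point of (0,∞); i.e. each self-similar profile has a representative which is differentiable on (0,∞). -/

import Mathlib

open MeasureTheory Real Set Filter

noncomputable def weight (a b x : ℝ) : ℝ := if x ≤ 1 then x ^ a else x ^ b

noncomputable def Xnorm (a b : ℝ) (g : ℝ → ℝ) : ℝ :=
  ∫ x in Ioi (0:ℝ), |g x| * weight a b x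

def MemX (a b : ℝ) (g : ℝ → ℝ) : Prop :=
  IntegrableOn (fun x => g x * weight a b x) (Ioi 0)

noncomputable def Kern (ε : ℝ) (W : ℝ → ℝ → ℝ) (x y : ℝ) : ℝ := 2 + ε * W x y

def GoodW (α : ℝ) (W : ℝ → ℝ → ℝ) : Prop :=
  ContinuousOn (fun p : ℝ × ℝ => W p.1 p.2) (Ioi 0 ×ˢ Ioi 0) ∧
  (∀ x y : ℝ, 0 < x → 0 < y → W x y = W y x) ∧
  (∀ l x y : ℝ, 0 < l → 0 < x → 0 < y → W (l * x) (l * y) = W x y) ∧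
  (∀ x y : ℝ, 0 < x → 0 < y → 0 ≤ W x y ∧ W x y ≤ (x / y) ^ α + (y / x) ^ α)

def IsProfile (K : ℝ → ℝ → ℝ) (φ : ℝ → ℝ) : Prop :=
  LocallyIntegrableOn φ (Ioi 0) ∧
  (∀ᵐ x ∂(volume.restrict (Ioi (0:ℝ))), 0 ≤ φ x) ∧
  IntegrableOn (fun x => x * φ x) (Ioi 0) ∧
  (∀ᵐ x ∂(volume.restrict (Ioi (0:ℝ))),
    x ^ 2 * φ x = ∫ y in Ioo 0 x, ∫ z in Ioi (x - y), y * K y z * φ y * φ z)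

def IsNormalised (φ : ℝ → ℝ) : Prop := ∫ x in Ioi (0:ℝ), x * φ x = 1

section
open scoped ENNReal Topology

/-- The abstract data: `ν` is the measure `φ(x) dx` and `k` the (totally defined) kernel. -/
structure CoagData (α ε : ℝ) (ν : Measure ℝ) (k : ℝ → ℝ → ℝ) : Prop where
  α0 : 0 < α
  α1 : α < 1
  ε0 : 0 < ε
  pos : ∀ᵐ x ∂ν, 0 < x
  mass : ∫⁻ x, ENNReal.ofReal x ∂ν = 1
  meas : Measurable (fun p : ℝ × ℝ => k p.1 p.2)
  symm : ∀ x y, k x y = k y x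
  low : ∀ x y, 2 ≤ k x y
  up : ∀ x y, 0 < x → 0 < y → k x y ≤ 2 + ε * ((x / y) ^ α + (y / x) ^ α)

noncomputable def th (k : ℝ → ℝ → ℝ) (p : ℝ × ℝ) : ℝ≥0∞ := ENNReal.ofReal (p.1 * k p.1 p.2)

noncomputable def Jf (ν : Measure ℝ) (k : ℝ → ℝ → ℝ) (x : ℝ) : ℝ≥0∞ :=
  ∫⁻ p, (if p.1 < x ∧ x < p.1 + p.2 then th k p else 0) ∂(ν.prod ν)

namespace CoagData

set_option linter.unusedSectionVars false

variable {α ε : ℝ} {ν : Measure ℝ} [SFinite ν] {k : ℝ → ℝ → ℝ}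

lemma meas_th (D : CoagData α ε ν k) : Measurable (th k) := by
  unfold th
  exact (measurable_fst.mul D.meas).ennreal_ofReal

lemma pos_prod (D : CoagData α ε ν k) : ∀ᵐ p ∂(ν.prod ν), 0 < p.1 ∧ 0 < p.2 := by
  have h1 := Measure.quasiMeasurePreserving_fst (μ := ν) (ν := ν) |>.ae D.pos
  have h2 := Measure.quasiMeasurePreserving_snd (μ := ν) (ν := ν) |>.ae D.pos
  filter_upwards [h1, h2] with p a b using ⟨a, b⟩

lemma mass_prod (D : CoagData α ε ν k) :
    ∫⁻ p, ENNReal.ofReal p.1 * ENNReal.ofReal p.2 ∂(ν.prod ν) = 1 := by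
  rw [lintegral_prod_mul (f := fun x => ENNReal.ofReal x) (g := fun x => ENNReal.ofReal x)
    (by fun_prop) (by fun_prop), D.mass, one_mul]

lemma bfin (D : CoagData α ε ν k) {a R : ℝ} (ha : 0 < a) :
    ∫⁻ p, (if a ≤ p.1 ∧ p.1 < R ∧ a ≤ p.2 then th k p else 0) ∂(ν.prod ν) ≠ ∞ := by
  have key : ∫⁻ p, (if a ≤ p.1 ∧ p.1 < R ∧ a ≤ p.2 then th k p else 0) ∂(ν.prod ν) ≤
      ∫⁻ p, ENNReal.ofReal ((2 + ε * (R / a) ^ α + ε) / a) *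
        (ENNReal.ofReal p.1 * ENNReal.ofReal p.2) ∂(ν.prod ν) := by
    apply lintegral_mono
    rintro ⟨y, z⟩
    dsimp only
    split_ifs with h
    · obtain ⟨h1, h2, h3⟩ := h
      have hy : 0 < y := ha.trans_le h1
      have hz : 0 < z := ha.trans_le h3
      have hR : 0 < R := hy.trans h2
      have hε := D.ε0
      unfold th
      have e1 : 0 ≤ (2 + ε * (R / a) ^ α + ε) / a := by positivity
      rw [← ENNReal.ofReal_mul hy.le, ← ENNReal.ofReal_mul e1]
      apply ENNReal.ofReal_le_ofReal
      dsimp only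
      have u1 : (y / z) ^ α ≤ (R / a) ^ α := by
        apply Real.rpow_le_rpow (by positivity) _ D.α0.le
        gcongr
      have hza : 1 ≤ z / a := by rwa [one_le_div ha]
      have u2 : (z / y) ^ α ≤ z / a := by
        calc (z / y) ^ α ≤ (z / a) ^ α := by
              apply Real.rpow_le_rpow (by positivity) _ D.α0.le
              gcongr
          _ ≤ (z / a) ^ (1:ℝ) := Real.rpow_le_rpow_of_exponent_le hza D.α1.le
          _ = z / a := Real.rpow_one _
      have u3 : k y z ≤ (2 + ε * (R / a) ^ α + ε) * (z / a) := by
        have := D.up y z hy hz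
        have c : 0 ≤ (2 + ε * (R / a) ^ α) := by positivity
        nlinarith [mul_le_mul_of_nonneg_left u1 hε.le, mul_le_mul_of_nonneg_left u2 hε.le]
      calc y * k y z ≤ y * ((2 + ε * (R / a) ^ α + ε) * (z / a)) := by gcongr
        _ = _ := by ring
    · exact zero_le
  refine ne_top_of_le_ne_top ?_ key
  rw [lintegral_const_mul _ (by fun_prop), D.mass_prod, mul_one]
  exact ENNReal.ofReal_ne_top

lemma efin (D : CoagData α ε ν k)
    (hz : ∀ b > 0, (∀ x ∈ Ioo 0 b, Jf ν k x = ∞) → ν (Iio b) = 0) {b : ℝ} (hb : 0 < b) :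
    ∫⁻ p, (if p.1 < b ∧ b ≤ p.2 then th k p else 0) ∂(ν.prod ν) ≠ ∞ := by
  intro htop
  have hJ : ∀ x ∈ Ioo 0 b, Jf ν k x = ∞ := by
    intro x hx
    have h1 : ∫⁻ p, (if p.1 < b ∧ b ≤ p.2 then th k p else 0) ∂(ν.prod ν) ≤
        ∫⁻ p, ((if p.1 < x ∧ x < p.1 + p.2 then th k p else 0) +
          (if x ≤ p.1 ∧ p.1 < b ∧ x ≤ p.2 then th k p else 0)) ∂(ν.prod ν) := by
      apply lintegral_mono_ae
      filter_upwards [D.pos_prod] with p hp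
      by_cases h : p.1 < b ∧ b ≤ p.2
      · rw [if_pos h]
        by_cases h' : p.1 < x
        · rw [if_pos ⟨h', by linarith [hx.2]⟩]
          exact le_self_add
        · rw [if_pos (c := x ≤ p.1 ∧ p.1 < b ∧ x ≤ p.2) ⟨not_lt.1 h', h.1, by linarith [hx.2]⟩]
          exact le_add_self
      · rw [if_neg h]; exact zero_le
    have m2 : Measurable (fun p : ℝ × ℝ =>
        if x ≤ p.1 ∧ p.1 < b ∧ x ≤ p.2 then th k p else 0) := by
      refine Measurable.ite ?_ D.meas_th measurable_const
      exact (measurableSet_le measurable_const measurable_fst).inter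
        ((measurableSet_lt measurable_fst measurable_const).inter
          (measurableSet_le measurable_const measurable_snd))
    rw [htop, lintegral_add_right _ m2, top_le_iff, ENNReal.add_eq_top] at h1
    exact h1.resolve_right (D.bfin hx.1)
  have h0 := hz b hb hJ
  have : ∫⁻ p, (if p.1 < b ∧ b ≤ p.2 then th k p else 0) ∂(ν.prod ν) = 0 := by
    refine (lintegral_congr_ae (g := fun _ => 0) ?_).trans lintegral_zero
    have h2 : ∀ᵐ x ∂ν, ¬ x < b := by
      rw [ae_iff]; simp only [not_not]; exact h0
    have h1 := Measure.quasiMeasurePreserving_fst (μ := ν) (ν := ν) |>.ae h2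
    filter_upwards [h1] with p hp
    rw [if_neg (fun h => hp h.1)]
  rw [this] at htop
  exact ENNReal.zero_ne_top htop

lemma measurable_joint (D : CoagData α ε ν k) : Measurable (fun q : ℝ × (ℝ × ℝ) =>
    (if q.2.1 < q.1 ∧ q.1 < q.2.1 + q.2.2 then th k q.2 else 0)) := by
  refine Measurable.ite ?_ (D.meas_th.comp measurable_snd) measurable_const
  exact (measurableSet_lt (f := fun q : ℝ × (ℝ × ℝ) => q.2.1) (g := fun q => q.1)
      (by fun_prop) (by fun_prop)).inter
    (measurableSet_lt (f := fun q : ℝ × (ℝ × ℝ) => q.1) (g := fun q => q.2.1 + q.2.2)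
      (by fun_prop) (by fun_prop))

lemma measurable_Jf (D : CoagData α ε ν k) : Measurable (Jf ν k) :=
  D.measurable_joint.lintegral_prod_right'

lemma tonelli (D : CoagData α ε ν k) {h : ℝ → ℝ≥0∞} (hh : Measurable h) :
    ∫⁻ x in Ioi 0, h x * Jf ν k x =
      ∫⁻ p, th k p * (∫⁻ x in Ioo p.1 (p.1 + p.2), h x) ∂(ν.prod ν) := by
  have h1 : ∀ x, h x * Jf ν k x =
      ∫⁻ p, h x * (if p.1 < x ∧ x < p.1 + p.2 then th k p else 0) ∂(ν.prod ν) := by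
    intro x
    have := D.measurable_joint.comp (measurable_prodMk_left (x := x))
    exact (lintegral_const_mul _ this).symm
  simp_rw [h1]
  rw [lintegral_lintegral_swap]
  · apply lintegral_congr_ae
    filter_upwards [D.pos_prod] with p hp
    have : ∀ x, h x * (if p.1 < x ∧ x < p.1 + p.2 then th k p else 0) =
        th k p * (Ioo p.1 (p.1 + p.2)).indicator h x := by
      intro x
      by_cases hx : p.1 < x ∧ x < p.1 + p.2
      · rw [if_pos hx, indicator_of_mem (s := Ioo p.1 (p.1 + p.2)) hx, mul_comm]
      · rw [if_neg hx, indicator_of_notMem (s := Ioo p.1 (p.1 + p.2)) hx]; simp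
    simp_rw [this]
    rw [lintegral_const_mul _ (hh.indicator measurableSet_Ioo),
      lintegral_indicator measurableSet_Ioo, Measure.restrict_restrict measurableSet_Ioo,
      inter_eq_left.2 (show Ioo p.1 (p.1 + p.2) ⊆ Ioi 0 from fun x hx => hp.1.trans hx.1)]
  · exact ((hh.comp measurable_fst).mul D.measurable_joint).aemeasurable

lemma jfin (D : CoagData α ε ν k)
    (hz : ∀ b > 0, (∀ x ∈ Ioo 0 b, Jf ν k x = ∞) → ν (Iio b) = 0) :
    ∀ᵐ x ∂(volume.restrict (Ioi (0:ℝ))), Jf ν k x ≠ ∞ := by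
  have main : ∀ r R : ℝ, 0 < r → r < R →
      ∀ᵐ x ∂(volume.restrict (Ioi (0:ℝ))), x ∈ Ioo r R → Jf ν k x ≠ ∞ := by
    intro r R hr hR
    have hb : 0 < r / 2 := by positivity
    have key : ∫⁻ x in Ioi 0, (Ioo r R).indicator (fun _ => 1) x * Jf ν k x ≠ ∞ := by
      rw [D.tonelli (measurable_const.indicator measurableSet_Ioo)]
      set e : ℝ × ℝ → ℝ≥0∞ := fun p => if p.1 < r/2 ∧ r/2 ≤ p.2 then th k p else 0 with he
      set c : ℝ × ℝ → ℝ≥0∞ := fun p => if r/2 ≤ p.1 ∧ p.1 < R ∧ r/2 ≤ p.2 then th k p else 0 with hc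
      have hle : ∫⁻ p, th k p * (∫⁻ x in Ioo p.1 (p.1 + p.2),
          (Ioo r R).indicator (fun _ => 1) x) ∂(ν.prod ν) ≤
          ∫⁻ p, ENNReal.ofReal R * (e p + (c p + e p.swap)) ∂(ν.prod ν) := by
        apply lintegral_mono_ae
        filter_upwards [D.pos_prod] with p hp
        obtain ⟨y, z⟩ := p
        simp only at hp ⊢
        rw [lintegral_indicator measurableSet_Ioo, Measure.restrict_restrict measurableSet_Ioo,
          lintegral_one, Measure.restrict_apply_univ]
        by_cases h1 : y < R
        swap
        · have : Ioo r R ∩ Ioo y (y+z) = ∅ := by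
            ext x; simp only [mem_inter_iff, mem_Ioo, mem_empty_iff_false, iff_false]
            rintro ⟨h, h'⟩; linarith
          rw [this]; simp
        by_cases h2 : r < y + z
        swap
        · have : Ioo r R ∩ Ioo y (y+z) = ∅ := by
            ext x; simp only [mem_inter_iff, mem_Ioo, mem_empty_iff_false, iff_false]
            rintro ⟨h, h'⟩; linarith
          rw [this]; simp
        have v1 : volume (Ioo r R ∩ Ioo y (y+z)) ≤ ENNReal.ofReal R := by
          refine (measure_mono inter_subset_left).trans ?_
          rw [Real.volume_Ioo]
          exact ENNReal.ofReal_le_ofReal (by linarith)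
        have v2 : volume (Ioo r R ∩ Ioo y (y+z)) ≤ ENNReal.ofReal z := by
          refine (measure_mono inter_subset_right).trans ?_
          rw [Real.volume_Ioo]
          exact ENNReal.ofReal_le_ofReal (by linarith)
        by_cases h3 : y < r / 2
        · calc _ ≤ th k (y,z) * ENNReal.ofReal R := by gcongr
            _ = ENNReal.ofReal R * e (y,z) := by
              rw [he]; dsimp only
              rw [if_pos ⟨h3, by linarith⟩, mul_comm]
            _ ≤ _ := by gcongr; exact le_self_add
        · by_cases h4 : r / 2 ≤ z
          · calc _ ≤ th k (y,z) * ENNReal.ofReal R := by gcongr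
              _ = ENNReal.ofReal R * c (y,z) := by
                rw [hc]; dsimp only
                rw [if_pos ⟨not_lt.1 h3, h1, h4⟩, mul_comm]
              _ ≤ _ := by gcongr; exact le_self_add.trans le_add_self
          · calc _ ≤ th k (y,z) * ENNReal.ofReal z := by gcongr
              _ ≤ ENNReal.ofReal R * e (z,y) := by
                rw [he]; dsimp only
                rw [if_pos ⟨not_le.1 h4, not_lt.1 h3⟩]
                unfold th; dsimp only
                have hk := D.low y z
                have hk0 : 0 ≤ k y z := by linarith
                rw [← ENNReal.ofReal_mul (mul_nonneg hp.1.le hk0),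
                  ← ENNReal.ofReal_mul (by linarith)]
                apply ENNReal.ofReal_le_ofReal
                rw [D.symm z y]
                have : y * (k y z * z) ≤ R * (k y z * z) := by
                  apply mul_le_mul_of_nonneg_right h1.le (mul_nonneg hk0 hp.2.le)
                linarith
              _ ≤ _ := by
                gcongr
                exact (le_add_self (a := e (z,y)) (b := c (y,z))).trans le_add_self
      have me : Measurable e := by
        refine Measurable.ite ?_ D.meas_th measurable_const
        exact (measurableSet_lt measurable_fst measurable_const).inter
          (measurableSet_le measurable_const measurable_snd)
      have mc : Measurable c := by
        refine Measurable.ite ?_ D.meas_th measurable_const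
        exact (measurableSet_le measurable_const measurable_fst).inter
          ((measurableSet_lt measurable_fst measurable_const).inter
            (measurableSet_le measurable_const measurable_snd))
      refine ne_top_of_le_ne_top ?_ hle
      have me' : Measurable (fun p : ℝ × ℝ => e p.swap) := me.comp measurable_swap
      rw [lintegral_const_mul _ (by fun_prop),
        lintegral_add_left me, lintegral_add_left mc, lintegral_prod_swap]
      refine ENNReal.mul_ne_top ENNReal.ofReal_ne_top ?_
      have := D.efin hz hb
      have := D.bfin (R := R) hb
      simp only [ne_eq, ENNReal.add_eq_top, not_or]
      tauto
    have := ae_lt_top' (f := fun x => (Ioo r R).indicator (fun _ => 1) x * Jf ν k x) (((measurable_const.indicator measurableSet_Ioo).mul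
      D.measurable_Jf).aemeasurable) key
    filter_upwards [this] with x hx hm
    rw [indicator_of_mem hm, one_mul] at hx
    exact hx.ne
  have all : ∀ᵐ x ∂(volume.restrict (Ioi (0:ℝ))), ∀ n : ℕ,
      x ∈ Ioo (1/((n:ℝ)+1)) ((n:ℝ)+2) → Jf ν k x ≠ ∞ := by
    rw [ae_all_iff]
    intro n
    apply main
    · positivity
    · have : 1/((n:ℝ)+1) ≤ 1 := by
        rw [div_le_one (by positivity)]; linarith [n.cast_nonneg (α := ℝ)]
      linarith [n.cast_nonneg (α := ℝ)]
  filter_upwards [all, ae_restrict_mem measurableSet_Ioi] with x hx hx0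
  obtain ⟨n, hn⟩ := exists_nat_gt (max x (1/x))
  apply hx n
  have h0 : (0:ℝ) < x := hx0
  have h1 := (le_max_left _ _).trans_lt hn
  have h2 := (le_max_right _ _).trans_lt hn
  refine ⟨?_, by linarith⟩
  rw [div_lt_iff₀ (by positivity)]
  rw [div_lt_iff₀ h0] at h2
  nlinarith

end CoagData

lemma lint_deriv {G h : ℝ → ℝ} {y w : ℝ} (hyw : y ≤ w)
    (hG : ∀ x ∈ Icc y w, HasDerivAt G (-(h x)) x) (hc : ContinuousOn h (Icc y w))
    (h0 : ∀ x ∈ Icc y w, 0 ≤ h x) :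
    ∫⁻ x in Ioo y w, ENNReal.ofReal (h x) = ENNReal.ofReal (G y - G w) := by
  have hi : IntegrableOn h (Ioc y w) :=
    (hc.integrableOn_Icc).mono_set Ioc_subset_Icc_self
  have e1 : ∫ x in y..w, -(h x) = G w - G y := by
    apply intervalIntegral.integral_eq_sub_of_hasDerivAt
    · intro x hx; rw [uIcc_of_le hyw] at hx; exact hG x hx
    · rw [intervalIntegrable_iff_integrableOn_Ioc_of_le hyw]; exact hi.neg
  rw [intervalIntegral.integral_neg, intervalIntegral.integral_of_le hyw] at e1
  rw [Measure.restrict_congr_set Ioo_ae_eq_Ioc, ← ofReal_integral_eq_lintegral_ofReal hi]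
  · congr 1; linarith
  · filter_upwards [ae_restrict_mem measurableSet_Ioc] with x hx
    exact h0 x (Ioc_subset_Icc_self hx)

namespace CoagData

set_option linter.unusedSectionVars false

variable {α ε : ℝ} {ν : Measure ℝ} [SFinite ν] {k : ℝ → ℝ → ℝ}

lemma sym_int {g : ℝ × ℝ → ℝ≥0∞} (hg : Measurable g) :
    2 * ∫⁻ p, g p ∂(ν.prod ν) = ∫⁻ p, (g p + g p.swap) ∂(ν.prod ν) := by
  rw [lintegral_add_left hg, lintegral_prod_swap, two_mul]

lemma test (D : CoagData α ε ν k)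
    (HE : ∀ h : ℝ → ℝ≥0∞, Measurable h →
      ∫⁻ x, ENNReal.ofReal (x^2) * h x ∂ν = ∫⁻ x in Ioi 0, h x * Jf ν k x)
    {h : ℝ → ℝ≥0∞} (hh : Measurable h) :
    ∫⁻ x, ENNReal.ofReal (x^2) * h x ∂ν =
      ∫⁻ p, th k p * (∫⁻ x in Ioo p.1 (p.1 + p.2), h x) ∂(ν.prod ν) := by
  rw [HE h hh, D.tonelli hh]

lemma tail_fin (D : CoagData α ε ν k) {δ : ℝ} (hδ : 0 < δ) : ν (Ioi δ) ≠ ∞ := by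
  have h1 := mul_meas_ge_le_lintegral (μ := ν) (f := fun x => ENNReal.ofReal x)
    (by fun_prop) (ENNReal.ofReal δ)
  rw [D.mass] at h1
  have h2 : ν (Ioi δ) ≤ ν {x | ENNReal.ofReal δ ≤ ENNReal.ofReal x} := by
    apply measure_mono
    intro x hx
    exact ENNReal.ofReal_le_ofReal (le_of_lt hx)
  intro h
  rw [h, top_le_iff] at h2
  rw [h2, ENNReal.mul_top (by simpa using hδ)] at h1
  exact absurd h1 (by simp)

lemma tail_le (D : CoagData α ε ν k)
    (HE : ∀ h : ℝ → ℝ≥0∞, Measurable h →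
      ∫⁻ x, ENNReal.ofReal (x^2) * h x ∂ν = ∫⁻ x in Ioi 0, h x * Jf ν k x)
    {δ : ℝ} (hδ : 0 < δ) : ν (Ioi δ) ≤ 1 := by
  set h : ℝ → ℝ≥0∞ := (Ioi δ).indicator (fun x => ENNReal.ofReal (1 / x^2)) with hh
  have hm : Measurable h := Measurable.indicator (by fun_prop) measurableSet_Ioi
  have T := D.test HE hm
  have hL : ∫⁻ x, ENNReal.ofReal (x^2) * h x ∂ν = ν (Ioi δ) := by
    rw [← lintegral_indicator_one measurableSet_Ioi]
    apply lintegral_congr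
    intro x
    by_cases hx : x ∈ Ioi δ
    · have : 0 < x := hδ.trans hx
      rw [hh, indicator_of_mem hx, indicator_of_mem hx, ← ENNReal.ofReal_mul (by positivity)]
      rw [mul_one_div_cancel (by positivity)]; simp
    · rw [hh, indicator_of_notMem hx, indicator_of_notMem hx, mul_zero]
  set g : ℝ × ℝ → ℝ≥0∞ := (Ioi δ ×ˢ Ioi δ).indicator
    (fun p => ENNReal.ofReal (2 * p.2 / (p.1 + p.2))) with hg
  have hgm : Measurable g :=
    Measurable.indicator (by fun_prop) (measurableSet_Ioi.prod measurableSet_Ioi)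
  have hR : ∫⁻ p, g p ∂(ν.prod ν) ≤
      ∫⁻ p, th k p * (∫⁻ x in Ioo p.1 (p.1 + p.2), h x) ∂(ν.prod ν) := by
    apply lintegral_mono
    rintro ⟨y, z⟩
    by_cases hp : (y, z) ∈ Ioi δ ×ˢ Ioi δ
    · have hy : δ < y := hp.1
      have hz : δ < z := hp.2
      have hy0 : 0 < y := hδ.trans hy
      have hz0 : 0 < z := hδ.trans hz
      have e : ∫⁻ x in Ioo y (y+z), h x = ENNReal.ofReal (1/y - 1/(y+z)) := by
        rw [← lint_deriv (G := fun x => 1/x) (h := fun x => 1/x^2) (by linarith)]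
        · apply setLIntegral_congr_fun measurableSet_Ioo
          intro x hx
          rw [hh, indicator_of_mem]
          exact hy.trans hx.1
        · intro x hx
          have : x ≠ 0 := by linarith [hx.1]
          simpa [one_div] using hasDerivAt_inv this
        · apply ContinuousOn.div continuousOn_const (by fun_prop)
          intro x hx
          have : x ≠ 0 := by linarith [hx.1]
          positivity
        · intro x hx; positivity
      dsimp only
      rw [hg, indicator_of_mem hp, e]
      unfold th
      have hk := D.low y z
      have hk0 : 0 ≤ k y z := by linarith
      rw [← ENNReal.ofReal_mul (by dsimp only; positivity)]
      apply ENNReal.ofReal_le_ofReal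
      dsimp only
      have : y * k y z * (1/y - 1/(y+z)) = k y z * (z / (y+z)) := by field_simp; ring
      rw [this, mul_div_assoc]
      gcongr
    · rw [hg, indicator_of_notMem hp]; exact zero_le
  have hS : 2 * ∫⁻ p, g p ∂(ν.prod ν) = 2 * (ν (Ioi δ) * ν (Ioi δ)) := by
    rw [sym_int hgm, ← Measure.prod_prod,
      ← lintegral_indicator_one (measurableSet_Ioi.prod measurableSet_Ioi),
      ← lintegral_const_mul _ (Measurable.indicator (by fun_prop)
        (measurableSet_Ioi.prod measurableSet_Ioi))]
    apply lintegral_congr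
    rintro ⟨y, z⟩
    by_cases hp : (y, z) ∈ Ioi δ ×ˢ Ioi δ
    · have hp' : (z, y) ∈ Ioi δ ×ˢ Ioi δ := ⟨hp.2, hp.1⟩
      have hy0 : 0 < y := hδ.trans hp.1
      have hz0 : 0 < z := hδ.trans hp.2
      rw [hg, Prod.swap_prod_mk, indicator_of_mem hp, indicator_of_mem hp', indicator_of_mem hp,
        ← ENNReal.ofReal_add (by dsimp only; positivity) (by dsimp only; positivity)]
      have : 2 * z / (y + z) + 2 * y / (z + y) = 2 := by field_simp; ring
      dsimp only
      rw [this]; simp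
    · have hp' : (z, y) ∉ Ioi δ ×ˢ Ioi δ := fun h => hp ⟨h.2, h.1⟩
      rw [hg, Prod.swap_prod_mk, indicator_of_notMem hp, indicator_of_notMem hp',
        indicator_of_notMem hp]; simp
  rw [ENNReal.mul_right_inj (by simp) (by simp)] at hS
  rw [← T, hL, hS] at hR
  have hf := D.tail_fin hδ
  by_contra hcon
  push Not at hcon
  have h1 : ν (Ioi δ) * 1 < ν (Ioi δ) * ν (Ioi δ) :=
    ENNReal.mul_lt_mul_right (by intro h; simp [h] at hcon) hf hcon
  rw [mul_one] at h1
  exact absurd hR (not_le.2 h1)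

lemma tail_sup (D : CoagData α ε ν k) :
    Tendsto (fun n : ℕ => ν (Ioi (1/((n:ℝ)+1)))) atTop (𝓝 (ν univ)) := by
  have h1 : ν univ = ν (⋃ n : ℕ, Ioi (1/((n:ℝ)+1))) := by
    apply measure_congr
    filter_upwards [D.pos] with x hx
    apply propext
    refine ⟨fun _ => ?_, fun _ => trivial⟩
    obtain ⟨n, hn⟩ := exists_nat_one_div_lt hx
    exact mem_iUnion.2 ⟨n, hn⟩
  rw [h1]
  apply tendsto_measure_iUnion_atTop
  intro m n hmn
  apply Ioi_subset_Ioi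
  have : (m:ℝ) ≤ n := by exact_mod_cast hmn
  gcongr

lemma mass_le (D : CoagData α ε ν k)
    (HE : ∀ h : ℝ → ℝ≥0∞, Measurable h →
      ∫⁻ x, ENNReal.ofReal (x^2) * h x ∂ν = ∫⁻ x in Ioi 0, h x * Jf ν k x) : ν univ ≤ 1 :=
  le_of_tendsto' D.tail_sup (fun n => D.tail_le HE (by positivity))

end CoagData

lemma fexp_nonneg {t : ℝ} (ht : 0 ≤ t) : 0 ≤ 1 - exp (-t) := by
  have : exp (-t) ≤ 1 := exp_le_one_iff.2 (by linarith)
  linarith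

lemma fexp_le (t : ℝ) : 1 - exp (-t) ≤ t := by
  have := add_one_le_exp (-t); linarith

lemma fexp_le_one (t : ℝ) : 1 - exp (-t) ≤ 1 := by
  have := exp_pos (-t); linarith

lemma rexp_nonneg (t : ℝ) : 0 ≤ 1 - exp (-t) - t * exp (-t) := by
  have h1 := add_one_le_exp t
  have h2 : exp t * exp (-t) = 1 := by rw [← exp_add]; simp
  nlinarith [exp_pos (-t)]

lemma rexp_le {t : ℝ} (ht : 0 ≤ t) : 1 - exp (-t) - t * exp (-t) ≤ t := by
  have := fexp_le t
  have := mul_nonneg ht (exp_pos (-t)).le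
  linarith

lemma fexp_rpow {t s : ℝ} (ht : 0 < t) (hs0 : 0 ≤ s) (hs1 : s ≤ 1) : 1 - exp (-t) ≤ t ^ s := by
  rcases le_total t 1 with h | h
  · calc _ ≤ t := fexp_le t
      _ = t ^ (1:ℝ) := (rpow_one t).symm
      _ ≤ t ^ s := rpow_le_rpow_of_exponent_ge ht h hs1
  · exact (fexp_le_one t).trans (one_le_rpow h hs0)

lemma ff_bound {α p y z : ℝ} (h0 : 0 < α) (h1 : α < 1) (hp : 0 < p) (hy : 0 < y) (hz : 0 < z) :
    (y / z) ^ α * ((1 - exp (-(p*y))) * (1 - exp (-(p*z)))) ≤ p ^ (2 - α) * (y * (1 + z)) := by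
  have a1 : 1 - exp (-(p*y)) ≤ (p*y) ^ (1 - α) :=
    fexp_rpow (by positivity) (by linarith) (by linarith)
  have a2 : 1 - exp (-(p*z)) ≤ p * z := fexp_le _
  have a3 : z ^ (1 - α) ≤ 1 + z := by
    rcases le_total z 1 with h | h
    · have := rpow_le_one hz.le h (by linarith : 0 ≤ 1 - α); linarith
    · have := rpow_le_rpow_of_exponent_le h (by linarith : 1 - α ≤ 1)
      rw [rpow_one] at this; linarith
  calc _ ≤ (y / z) ^ α * ((p*y) ^ (1 - α) * (p * z)) := by
        gcongr
        exact fexp_nonneg (by positivity)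
    _ = p ^ (2 - α) * (y * z ^ (1 - α)) := by
        rw [div_rpow hy.le hz.le, mul_rpow hp.le hy.le, rpow_sub hp, rpow_sub hp, rpow_sub hy,
          rpow_sub hz]
        have := rpow_pos_of_pos hp α
        have := rpow_pos_of_pos hy α
        have := rpow_pos_of_pos hz α
        simp only [rpow_one, rpow_two]
        field_simp
    _ ≤ _ := by gcongr

namespace CoagData

set_option linter.unusedSectionVars false

variable {α ε : ℝ} {ν : Measure ℝ} {k : ℝ → ℝ → ℝ}

lemma int_id (D : CoagData α ε ν k) : Integrable (fun x => x) ν := by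
  refine ⟨by fun_prop, ?_⟩
  rw [hasFiniteIntegral_iff_ofReal (by filter_upwards [D.pos] with x hx using hx.le), D.mass]
  simp

lemma integral_id (D : CoagData α ε ν k) : ∫ x, x ∂ν = 1 := by
  rw [integral_eq_lintegral_of_nonneg_ae (by filter_upwards [D.pos] with x hx using hx.le)
    (by fun_prop), D.mass]
  simp

variable [IsFiniteMeasure ν]

lemma int_f (D : CoagData α ε ν k) {p : ℝ} (hp : 0 < p) :
    Integrable (fun x => 1 - exp (-(p*x))) ν := by
  refine Integrable.mono' (integrable_const (1:ℝ)) (by fun_prop) ?_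
  filter_upwards [D.pos] with x hx
  rw [norm_of_nonneg (fexp_nonneg (by positivity))]
  exact fexp_le_one _

lemma int_r (D : CoagData α ε ν k) {p : ℝ} (hp : 0 < p) :
    Integrable (fun x => 1 - exp (-(p*x)) - (p*x) * exp (-(p*x))) ν := by
  refine Integrable.mono' (D.int_id.const_mul p) (by fun_prop) ?_
  filter_upwards [D.pos] with x hx
  rw [norm_of_nonneg (rexp_nonneg _)]
  exact rexp_le (by positivity)

lemma lap_eq (D : CoagData α ε ν k)
    (HE : ∀ h : ℝ → ℝ≥0∞, Measurable h →
      ∫⁻ x, ENNReal.ofReal (x^2) * h x ∂ν = ∫⁻ x in Ioi 0, h x * Jf ν k x)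
    {p : ℝ} (hp : 0 < p) :
    2 * ∫⁻ x, ENNReal.ofReal (1 - exp (-(p*x)) - (p*x) * exp (-(p*x))) ∂ν =
      ∫⁻ q, ENNReal.ofReal (k q.1 q.2 * ((1 - exp (-(p*q.1))) * (1 - exp (-(p*q.2)))))
        ∂(ν.prod ν) := by
  have T := D.test HE (h := fun x =>
    ENNReal.ofReal ((1 - exp (-(p*x)) - (p*x) * exp (-(p*x))) / x^2)) (by fun_prop)
  have hL : ∫⁻ x, ENNReal.ofReal (x^2) *
      ENNReal.ofReal ((1 - exp (-(p*x)) - (p*x) * exp (-(p*x))) / x^2) ∂ν =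
      ∫⁻ x, ENNReal.ofReal (1 - exp (-(p*x)) - (p*x) * exp (-(p*x))) ∂ν := by
    apply lintegral_congr_ae
    filter_upwards [D.pos] with x hx
    rw [← ENNReal.ofReal_mul (by positivity), mul_div_cancel₀ _ (by positivity)]
  set G : ℝ → ℝ := fun x => (1 - exp (-(p*x))) / x with hG
  have hmG : Measurable G := by fun_prop
  have hanti : ∀ y z : ℝ, 0 < y → 0 < z → ∫⁻ x in Ioo y (y+z),
      ENNReal.ofReal ((1 - exp (-(p*x)) - (p*x) * exp (-(p*x))) / x^2) =
        ENNReal.ofReal (G y - G (y+z)) := by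
    intro y z hy hz
    apply lint_deriv (by linarith)
    · intro x hx
      have hx0 : x ≠ 0 := by linarith [hx.1]
      have d1 : HasDerivAt (fun x => 1 - exp (-(p*x))) (-(exp (-(p*x)) * (-(p*1)))) x :=
        (((hasDerivAt_id x).const_mul p).neg.exp).const_sub 1
      refine HasDerivAt.congr_deriv (d1.div (hasDerivAt_id x) hx0) ?_
      field_simp
      ring
    · apply ContinuousOn.div (by fun_prop) (by fun_prop)
      intro x hx
      have : x ≠ 0 := by linarith [hx.1]
      positivity
    · intro x hx
      have := rexp_nonneg (p*x)
      positivity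
  have hGle : ∀ y z : ℝ, 0 < y → 0 < z → 0 ≤ G y - G (y+z) := by
    intro y z hy hz
    have : AntitoneOn G (Ioi 0) := by
      apply antitoneOn_of_deriv_nonpos (convex_Ioi 0)
      · apply ContinuousOn.div (by fun_prop) (by fun_prop)
        intro x hx
        exact ne_of_gt hx
      · intro x hx
        rw [interior_Ioi] at hx
        have hx0 : x ≠ 0 := ne_of_gt hx
        exact DifferentiableAt.differentiableWithinAt (by
          apply DifferentiableAt.div (by fun_prop) (by fun_prop) hx0)
      · intro x hx
        rw [interior_Ioi] at hx
        have hx0 : x ≠ 0 := ne_of_gt hx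
        have d1 : HasDerivAt (fun x => 1 - exp (-(p*x))) (-(exp (-(p*x)) * (-(p*1)))) x :=
          (((hasDerivAt_id x).const_mul p).neg.exp).const_sub 1
        have d2 := d1.div (hasDerivAt_id x) hx0
        have : deriv G x = _ := d2.deriv
        rw [this]
        have := rexp_nonneg (p*x)
        apply div_nonpos_of_nonpos_of_nonneg _ (by positivity)
        simp only [id]
        nlinarith
    have := this (show y ∈ Ioi 0 from hy) (show y + z ∈ Ioi 0 by simp; linarith) (by linarith)
    linarith
  rw [hL] at T
  have hT2 : ∫⁻ q, th k q * (∫⁻ x in Ioo q.1 (q.1+q.2),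
      ENNReal.ofReal ((1 - exp (-(p*x)) - (p*x) * exp (-(p*x))) / x^2)) ∂(ν.prod ν) =
      ∫⁻ q, th k q * ENNReal.ofReal (G q.1 - G (q.1+q.2)) ∂(ν.prod ν) := by
    apply lintegral_congr_ae
    filter_upwards [D.pos_prod] with q hq
    rw [hanti q.1 q.2 hq.1 hq.2]
  have hmk := D.meas_th
  rw [T, hT2, sym_int (by fun_prop)]
  apply lintegral_congr_ae
  filter_upwards [D.pos_prod] with q hq
  obtain ⟨y, z⟩ := q
  obtain ⟨hy, hz⟩ := hq
  dsimp only at hy hz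
  have hk := D.low y z
  have hk0 : 0 ≤ k y z := by linarith
  unfold th
  simp only [Prod.swap_prod_mk]
  rw [D.symm z y]
  have g1 := hGle y z hy hz
  have g2 := hGle z y hz hy
  rw [← ENNReal.ofReal_mul (by positivity), ← ENNReal.ofReal_mul (by positivity),
    ← ENNReal.ofReal_add (by positivity) (by positivity)]
  congr 1
  rw [hG, add_comm z y]
  dsimp only
  have hs : y + z ≠ 0 := by positivity
  have he : exp (-(p * (y + z))) = exp (-(p*y)) * exp (-(p*z)) := by
    rw [← exp_add]; congr 1; ring
  rw [he]
  field_simp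
  ring

lemma lap_ineq (D : CoagData α ε ν k) (hν : ν univ ≤ 1)
    (HE : ∀ h : ℝ → ℝ≥0∞, Measurable h →
      ∫⁻ x, ENNReal.ofReal (x^2) * h x ∂ν = ∫⁻ x in Ioi 0, h x * Jf ν k x)
    {p : ℝ} (hp : 0 < p) :
    ∫ x, (1 - exp (-(p*x)) - (p*x) * exp (-(p*x))) ∂ν ≤
      (∫ x, (1 - exp (-(p*x))) ∂ν)^2 + 2 * ε * p ^ (2 - α) := by
  have hf := D.int_f hp
  have hx := D.int_id
  have h1x : Integrable (fun x : ℝ => 1 + x) ν := (integrable_const (1:ℝ)).add hx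
  have i1 := (hf.mul_prod hf).const_mul 2
  have i2 := ((hx.mul_prod h1x).add (h1x.mul_prod hx)).const_mul (ε * p ^ (2 - α))
  set g : ℝ × ℝ → ℝ := fun q => 2 * ((1 - exp (-(p*q.1))) * (1 - exp (-(p*q.2)))) +
    (ε * p ^ (2 - α)) * (q.1 * (1 + q.2) + (1 + q.1) * q.2) with hg
  have ig : Integrable g (ν.prod ν) := i1.add i2
  have eg : ∫ q, g q ∂(ν.prod ν) = 2 * (∫ x, (1 - exp (-(p*x))) ∂ν)^2 +
      (ε * p ^ (2 - α)) * (2 * (ν.real univ + 1)) := by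
    have e1 : ∫ x, (1 + x) ∂ν = ν.real univ + 1 := by
      rw [integral_add (integrable_const _) hx, D.integral_id]; simp
    have := integral_add i1 i2
    rw [integral_const_mul, integral_const_mul] at this
    simp only [Pi.add_apply] at this
    rw [integral_add (hx.mul_prod h1x) (h1x.mul_prod hx), integral_prod_mul (μ := ν) (ν := ν)
      (fun x => 1 - exp (-(p*x))) (fun x => 1 - exp (-(p*x))),
      integral_prod_mul (μ := ν) (ν := ν) (fun x => x) (fun x => 1 + x),
      integral_prod_mul (μ := ν) (ν := ν) (fun x => 1 + x) (fun x => x), e1, D.integral_id] at this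
    rw [hg, this]; ring
  have hreal : ν.real univ ≤ 1 := by
    unfold Measure.real
    exact ENNReal.toReal_le_of_le_ofReal zero_le_one (by simpa using hν)
  have hε := D.ε0
  have hle : ∫⁻ q, ENNReal.ofReal (k q.1 q.2 * ((1 - exp (-(p*q.1))) * (1 - exp (-(p*q.2)))))
        ∂(ν.prod ν) ≤ ∫⁻ q, ENNReal.ofReal (g q) ∂(ν.prod ν) := by
    apply lintegral_mono_ae
    filter_upwards [D.pos_prod] with q hq
    obtain ⟨y, z⟩ := q
    obtain ⟨hy, hz⟩ := hq
    apply ENNReal.ofReal_le_ofReal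
    dsimp only at hy hz ⊢
    rw [hg]; dsimp only
    have b1 := ff_bound D.α0 D.α1 hp hy hz
    have b2 := ff_bound D.α0 D.α1 hp hz hy
    have f1 : 0 ≤ 1 - exp (-(p*y)) := fexp_nonneg (by positivity)
    have f2 : 0 ≤ 1 - exp (-(p*z)) := fexp_nonneg (by positivity)
    have hu := mul_le_mul_of_nonneg_right (D.up y z hy hz) (mul_nonneg f1 f2)
    have b3 := mul_le_mul_of_nonneg_left (add_le_add b1 b2) hε.le
    nlinarith
  have hg0 : 0 ≤ᵐ[ν.prod ν] g := by
    filter_upwards [D.pos_prod] with q hq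
    have h1 := hq.1
    have h2 := hq.2
    have f1 : 0 ≤ 1 - exp (-(p*q.1)) := fexp_nonneg (by positivity)
    have f2 : 0 ≤ 1 - exp (-(p*q.2)) := fexp_nonneg (by positivity)
    simp only [hg, Pi.zero_apply]
    positivity
  rw [← D.lap_eq HE hp, ← ofReal_integral_eq_lintegral_ofReal ig hg0,
    ← ofReal_integral_eq_lintegral_ofReal (D.int_r hp) (ae_of_all _ fun x => rexp_nonneg _),
    show (2:ℝ≥0∞) = ENNReal.ofReal 2 by simp, ← ENNReal.ofReal_mul (by norm_num),
    ENNReal.ofReal_le_ofReal_iff (integral_nonneg_of_ae hg0), eg] at hle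
  have : 0 < ε * p ^ (2 - α) := by positivity
  nlinarith

lemma u_deriv (D : CoagData α ε ν k) {p : ℝ} (hp : 0 < p) :
    HasDerivAt (fun p => ∫ x, (1 - exp (-(p*x))) / p ∂ν)
      (-(∫ x, (1 - exp (-(p*x)) - (p*x) * exp (-(p*x))) ∂ν) / p^2) p := by
  have key := hasDerivAt_integral_of_dominated_loc_of_deriv_le (μ := ν) (x₀ := p)
    (s := Ioi (p/2)) (F := fun p x => (1 - exp (-(p*x))) / p)
    (F' := fun p x => -(1 - exp (-(p*x)) - (p*x) * exp (-(p*x))) / p^2)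
    (bound := fun x => (2/p) * x) (Ioi_mem_nhds (by linarith))
    (Eventually.of_forall fun q => by fun_prop) ((D.int_f hp).div_const p) (by fun_prop)
    ?_ (D.int_id.const_mul _) ?_
  · have := key.2
    rw [integral_div, integral_neg] at this
    exact this
  · filter_upwards [D.pos] with x hx q hq
    have hq' : p/2 < q := hq
    have hq0 : 0 < q := by linarith
    rw [neg_div, norm_neg, norm_of_nonneg (div_nonneg (rexp_nonneg _) (by positivity)),
      div_le_iff₀ (by positivity)]
    calc _ ≤ q * x := rexp_le (by positivity)
      _ = (2 / p) * x * (p/2 * q) := by field_simp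
      _ ≤ (2 / p) * x * q^2 := by
        have : p/2 * q ≤ q^2 := by nlinarith
        gcongr
  · filter_upwards with x q hq
    have hq' : p/2 < q := hq
    have hq0 : q ≠ 0 := by linarith
    have d1 : HasDerivAt (fun q => 1 - exp (-(q*x))) (-(exp (-(q*x)) * (-(1*x)))) q :=
        (((hasDerivAt_id q).mul_const x).neg.exp).const_sub 1
    refine HasDerivAt.congr_deriv (d1.div (hasDerivAt_id q) hq0) ?_
    field_simp
    ring

lemma u_lim (D : CoagData α ε ν k) :
    Tendsto (fun p => ∫ x, (1 - exp (-(p*x))) / p ∂ν) (𝓝[>] 0) (𝓝 1) := by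
  suffices h : Tendsto (fun p => ∫ x, (1 - exp (-(p*x))) / p ∂ν) (𝓝[>] 0) (𝓝 (∫ x, x ∂ν)) by
    rwa [D.integral_id] at h
  apply tendsto_integral_filter_of_dominated_convergence (fun x => x)
  · exact Eventually.of_forall fun q => by fun_prop
  · filter_upwards [self_mem_nhdsWithin] with p hp
    have hp' : 0 < p := hp
    filter_upwards [D.pos] with x hx
    rw [norm_of_nonneg (div_nonneg (fexp_nonneg (by positivity)) hp'.le), div_le_iff₀ hp', mul_comm]
    exact fexp_le _
  · exact D.int_id
  · filter_upwards with x
    have d1 : HasDerivAt (fun q => 1 - exp (-(q*x))) (-(exp (-(0*x)) * (-(1*x)))) 0 :=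
        (((hasDerivAt_id (0:ℝ)).mul_const x).neg.exp).const_sub 1
    have := (hasDerivAt_iff_tendsto_slope_zero.1 d1)
    simp only [zero_add, zero_mul, neg_zero, exp_zero, sub_self, sub_zero, smul_eq_mul, one_mul,
      neg_neg] at this
    refine (this.mono_left (nhdsWithin_mono _ (fun y hy => ne_of_gt hy))).congr fun p => ?_
    rw [inv_mul_eq_div]

lemma mass_low (D : CoagData α ε ν k) (hν : ν univ ≤ 1)
    (HE : ∀ h : ℝ → ℝ≥0∞, Measurable h →
      ∫⁻ x, ENNReal.ofReal (x^2) * h x ∂ν = ∫⁻ x in Ioi 0, h x * Jf ν k x)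
    {P : ℝ} (hP : 0 < P) :
    P / (1 + P) - 2 * ε * P ^ (2 - α) / (1 - α) ≤ ν.real univ := by
  set u : ℝ → ℝ := fun p => ∫ x, (1 - exp (-(p*x))) / p ∂ν with hu
  set c : ℝ := 2 * ε / (1 - α) with hc
  have hα := D.α1
  have hα0 := D.α0
  have hε := D.ε0
  have h1α : 0 < 1 - α := by linarith
  have hc0 : 0 < c := by rw [hc]; positivity
  set w : ℝ → ℝ := fun p => u p + c * p ^ (1 - α) with hw
  have hu0 : ∀ p, 0 < p → 0 ≤ u p := by
    intro p hp
    apply integral_nonneg_of_ae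
    filter_upwards [D.pos] with x hx
    exact div_nonneg (fexp_nonneg (by positivity)) hp.le
  have hw0 : ∀ p, 0 < p → 0 < w p := by
    intro p hp
    have := hu0 p hp
    simp only [hw]; positivity
  have hwd : ∀ p, 0 < p → ∃ d, HasDerivAt w d p ∧ -(w p)^2 ≤ d := by
    intro p hp
    have d1 := D.u_deriv hp
    have d2 : HasDerivAt (fun p : ℝ => c * p ^ (1 - α)) (c * ((1 - α) * p ^ (1 - α - 1))) p :=
      (hasDerivAt_rpow_const (Or.inl hp.ne')).const_mul c
    refine ⟨_, d1.add d2, ?_⟩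
    have L := D.lap_ineq hν HE hp
    have eQ : ∫ x, (1 - exp (-(p*x))) ∂ν = p * u p := by
      simp only [hu]; rw [integral_div]; field_simp
    rw [eQ] at L
    have e3 : p ^ (2 - α) = p^2 * p ^ (-α) := by
      rw [← rpow_natCast, ← rpow_add hp]; norm_num; ring_nf
    have e4 : (1 - α - 1) = -α := by ring
    have hcc : c * (1 - α) = 2 * ε := by rw [hc]; field_simp
    rw [e4, ← mul_assoc, hcc]
    rw [e3] at L
    have L2 : (∫ x, (1 - exp (-(p*x)) - (p*x) * exp (-(p*x))) ∂ν) / p^2 ≤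
        u p ^ 2 + 2 * ε * p ^ (-α) := by
      rw [div_le_iff₀ (by positivity)]; linarith
    have : (u p)^2 ≤ (w p)^2 := by
      apply pow_le_pow_left₀ (hu0 p hp)
      simp only [hw]
      have : 0 ≤ c * p ^ (1 - α) := by positivity
      linarith
    rw [neg_div]; linarith
  have hanti : AntitoneOn (fun p => 1 / w p - p) (Ioi 0) := by
    have hd : ∀ p, 0 < p → ∃ d, HasDerivAt (fun p => 1 / w p - p) d p ∧ d ≤ 0 := by
      intro p hp
      obtain ⟨d, h1, h2⟩ := hwd p hp
      have hwp := hw0 p hp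
      refine ⟨_, (((hasDerivAt_const p (1:ℝ)).div h1 hwp.ne')).sub (hasDerivAt_id p), ?_⟩
      have : (0 * w p - 1 * d) / (w p)^2 ≤ 1 := by
        rw [div_le_one (by positivity)]; linarith
      linarith
    apply antitoneOn_of_deriv_nonpos (convex_Ioi 0)
    · intro p hp
      obtain ⟨d, h1, h2⟩ := hd p hp
      exact h1.continuousAt.continuousWithinAt
    · intro p hp
      rw [interior_Ioi] at hp
      obtain ⟨d, h1, h2⟩ := hd p hp
      exact h1.differentiableAt.differentiableWithinAt
    · intro p hp
      rw [interior_Ioi] at hp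
      obtain ⟨d, h1, h2⟩ := hd p hp
      rw [h1.deriv]; exact h2
  have hlim : Tendsto (fun p => 1 / w p - p) (𝓝[>] 0) (𝓝 1) := by
    have t1 : Tendsto (fun p : ℝ => c * p ^ (1 - α)) (𝓝[>] 0) (𝓝 0) := by
      have : ContinuousAt (fun p : ℝ => c * p ^ (1 - α)) 0 :=
        (continuousAt_rpow_const 0 (1 - α) (Or.inr h1α.le)).const_mul c
      have := this.tendsto
      rw [zero_rpow h1α.ne', mul_zero] at this
      exact this.mono_left nhdsWithin_le_nhds
    have t2 : Tendsto w (𝓝[>] 0) (𝓝 1) := by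
      simpa using D.u_lim.add t1
    have t3 : Tendsto (fun p : ℝ => p) (𝓝[>] 0) (𝓝 0) := tendsto_id.mono_left nhdsWithin_le_nhds
    simpa using ((tendsto_const_nhds (x := (1:ℝ))).div t2 one_ne_zero).sub t3
  have hfin : 1 / w P - P ≤ 1 := by
    apply ge_of_tendsto hlim
    have : Ioc (0:ℝ) P ∈ 𝓝[>] (0:ℝ) := Ioc_mem_nhdsGT hP
    filter_upwards [this] with p hp
    exact hanti hp.1 (show P ∈ Ioi 0 from hP) hp.2
  have hwP := hw0 P hP
  have h2 : 1 / (1 + P) ≤ w P := by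
    rw [div_le_iff₀ (by positivity)]
    have : 1 / w P ≤ 1 + P := by linarith
    rw [div_le_iff₀ hwP] at this
    linarith
  have h3 : P * u P ≤ ν.real univ := by
    have : P * u P = ∫ x, (1 - exp (-(P*x))) ∂ν := by
      simp only [hu]; rw [integral_div]; field_simp
    rw [this]
    calc _ ≤ ∫ x, (1:ℝ) ∂ν := integral_mono (D.int_f hP) (integrable_const _)
            (fun x => fexp_le_one _)
      _ = _ := by simp
  have e5 : P ^ (2 - α) = P * P ^ (1 - α) := by
    conv_rhs => rw [← rpow_one P, rpow_one P, ← rpow_one_add' hP.le (by linarith)]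
    congr 1; ring
  rw [e5]
  have h4 := mul_le_mul_of_nonneg_left h2 hP.le
  simp only [hw] at h4
  have : 2 * ε * (P * P ^ (1 - α)) / (1 - α) = P * (c * P ^ (1 - α)) := by rw [hc]; ring
  rw [this]
  have : P / (1 + P) = P * (1 / (1 + P)) := by ring
  rw [this]
  linarith

end CoagData

namespace CoagData

set_option linter.unusedSectionVars false

variable {α ε : ℝ} {ν : Measure ℝ} {k : ℝ → ℝ → ℝ} [IsFiniteMeasure ν]

lemma neg_trunc (D : CoagData α ε ν k)
    (HE : ∀ h : ℝ → ℝ≥0∞, Measurable h →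
      ∫⁻ x, ENNReal.ofReal (x^2) * h x ∂ν = ∫⁻ x in Ioi 0, h x * Jf ν k x)
    {δ : ℝ} (hδ : 0 < δ) (hN : (1 + α) / 2 < ν.real (Ioi δ)) {η : ℝ} (hη : 0 < η) :
    ∫⁻ x in Ioi η, ENNReal.ofReal (x ^ (-α)) ∂ν ≤
      ENNReal.ofReal (2 * δ ^ (-1-α) * ν.real (Ioi δ) / (2 * ν.real (Ioi δ) - (1 + α))) := by
  have hα0 := D.α0
  set M := ∫⁻ x in Ioi η, ENNReal.ofReal (x ^ (-α)) ∂ν with hM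
  have hMfin : M ≠ ∞ := by
    have : M ≤ ∫⁻ x in Ioi η, ENNReal.ofReal (η ^ (-α)) ∂ν := by
      apply setLIntegral_mono measurable_const
      intro x hx
      apply ENNReal.ofReal_le_ofReal
      exact rpow_le_rpow_of_nonpos hη (le_of_lt hx) (by linarith)
    refine ne_top_of_le_ne_top ?_ this
    rw [setLIntegral_const]
    exact ENNReal.mul_ne_top ENNReal.ofReal_ne_top (measure_ne_top _ _)
  set h : ℝ → ℝ≥0∞ := (Ioi η).indicator (fun x => ENNReal.ofReal ((1+α) * x ^ (-2-α))) with hh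
  have hm : Measurable h := Measurable.indicator (by fun_prop) measurableSet_Ioi
  have T := D.test HE hm
  have hL : ∫⁻ x, ENNReal.ofReal (x^2) * h x ∂ν = ENNReal.ofReal (1+α) * M := by
    rw [hM, ← lintegral_indicator measurableSet_Ioi, ← lintegral_const_mul _
      (Measurable.indicator (by fun_prop) measurableSet_Ioi)]
    apply lintegral_congr
    intro x
    by_cases hx : x ∈ Ioi η
    · have h0 : 0 < x := hη.trans hx
      rw [hh, indicator_of_mem hx, indicator_of_mem hx, ← ENNReal.ofReal_mul (by positivity),
        ← ENNReal.ofReal_mul (by positivity)]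
      congr 1
      have : x ^ (-α) = x^2 * x ^ (-2-α) := by
        rw [← rpow_natCast, ← rpow_add h0]; congr 1; push_cast; ring
      rw [this]; ring
    · rw [hh, indicator_of_notMem hx, indicator_of_notMem hx, mul_zero, mul_zero]
  set c : ℝ := 2 * δ ^ (-1-α) with hc
  have hc0 : 0 < c := by rw [hc]; positivity
  set A : ℝ → ℝ≥0∞ := (Ioi η).indicator (fun y => ENNReal.ofReal (2 * y ^ (-α))) with hA
  set B : ℝ → ℝ≥0∞ := (Ioi δ).indicator 1 with hB
  have mA : Measurable A := Measurable.indicator (by fun_prop) measurableSet_Ioi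
  have mB : Measurable B := Measurable.indicator measurable_one measurableSet_Ioi
  have hle : ∫⁻ p, A p.1 * B p.2 ∂(ν.prod ν) ≤
      ∫⁻ p, (th k p * (∫⁻ x in Ioo p.1 (p.1 + p.2), h x) + ENNReal.ofReal (c * p.1) * B p.2)
        ∂(ν.prod ν) := by
    apply lintegral_mono_ae
    filter_upwards [D.pos_prod] with p hp
    obtain ⟨y, z⟩ := p
    dsimp only at hp ⊢
    by_cases hy : y ∈ Ioi η
    swap
    · rw [hA, indicator_of_notMem hy, zero_mul]; exact zero_le
    by_cases hz : z ∈ Ioi δ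
    swap
    · rw [hB, indicator_of_notMem hz, mul_zero]; exact zero_le
    rw [hA, hB, indicator_of_mem hy, indicator_of_mem hz, Pi.one_apply, mul_one, mul_one]
    obtain ⟨hy0, hz0⟩ := hp
    have hyη : η < y := hy
    have hzδ : δ < z := hz
    have e : ∫⁻ x in Ioo y (y+z), h x = ENNReal.ofReal (y ^ (-1-α) - (y+z) ^ (-1-α)) := by
      rw [← lint_deriv (G := fun x => x ^ (-1-α)) (h := fun x => (1+α) * x ^ (-2-α)) (by linarith)]
      · apply setLIntegral_congr_fun measurableSet_Ioo
        intro x hx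
        rw [hh, indicator_of_mem]
        exact hyη.trans hx.1
      · intro x hx
        have : x ≠ 0 := by linarith [hx.1]
        refine (hasDerivAt_rpow_const (Or.inl this)).congr_deriv ?_
        rw [show -1 - α - 1 = -2 - α by ring]; ring
      · intro x hx
        have : x ≠ 0 := by linarith [hx.1]
        exact ((continuousAt_rpow_const x _ (Or.inl this)).const_mul _).continuousWithinAt
      · intro x hx
        have : 0 < x := by linarith [hx.1]
        positivity
    rw [e]
    unfold th
    have hk := D.low y z
    have hk0 : 0 ≤ k y z := by linarith
    have q1 : (y+z) ^ (-1-α) ≤ δ ^ (-1-α) :=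
      rpow_le_rpow_of_nonpos hδ (by linarith) (by linarith)
    have q2 : (y+z) ^ (-1-α) ≤ y ^ (-1-α) :=
      rpow_le_rpow_of_nonpos hy0 (by linarith) (by linarith)
    have q3 : y ^ (-α) = y * y ^ (-1-α) := by
      rw [← rpow_one_add' hy0.le (by linarith)]; congr 1; ring
    rw [← ENNReal.ofReal_mul (by positivity), ← ENNReal.ofReal_add
      (mul_nonneg (by positivity) (by linarith)) (by positivity)]
    apply ENNReal.ofReal_le_ofReal
    dsimp only
    have q4 : y * 2 * (y ^ (-1-α) - (y+z) ^ (-1-α)) ≤ y * k y z * (y ^ (-1-α) - (y+z) ^ (-1-α)) := by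
      apply mul_le_mul_of_nonneg_right _ (by linarith)
      gcongr
    have q5 := mul_le_mul_of_nonneg_left q1 hy0.le
    rw [q3, hc]
    nlinarith
  rw [lintegral_add_right _ (by fun_prop), ← T, hL,
    lintegral_prod_mul mA.aemeasurable mB.aemeasurable,
    lintegral_prod_mul (f := fun x => ENNReal.ofReal (c * x)) (by fun_prop) mB.aemeasurable] at hle
  have iA : ∫⁻ y, A y ∂ν = ENNReal.ofReal 2 * M := by
    rw [hA, lintegral_indicator measurableSet_Ioi, hM, ← lintegral_const_mul _ (by fun_prop)]
    simp_rw [← ENNReal.ofReal_mul (show (0:ℝ) ≤ 2 by norm_num)]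
  have iB : ∫⁻ y, B y ∂ν = ENNReal.ofReal (ν.real (Ioi δ)) := by
    rw [hB, lintegral_indicator_one measurableSet_Ioi, ofReal_measureReal]
  have iC : ∫⁻ y, ENNReal.ofReal (c * y) ∂ν = ENNReal.ofReal c := by
    simp_rw [ENNReal.ofReal_mul hc0.le]
    rw [lintegral_const_mul _ (by fun_prop), D.mass, mul_one]
  rw [iA, iB, iC] at hle
  set N := ν.real (Ioi δ)
  have hN0 : 0 < N := by linarith
  rw [← ENNReal.ofReal_toReal hMfin] at hle ⊢
  have hm0 : 0 ≤ M.toReal := ENNReal.toReal_nonneg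
  rw [← ENNReal.ofReal_mul (by norm_num), ← ENNReal.ofReal_mul (by positivity),
    ← ENNReal.ofReal_mul (by positivity), ← ENNReal.ofReal_mul (by positivity),
    ← ENNReal.ofReal_add (by positivity) (by positivity),
    ENNReal.ofReal_le_ofReal_iff (by positivity)] at hle
  apply ENNReal.ofReal_le_ofReal
  rw [le_div_iff₀ (by linarith)]
  nlinarith

lemma neg_moment (D : CoagData α ε ν k)
    (HE : ∀ h : ℝ → ℝ≥0∞, Measurable h →
      ∫⁻ x, ENNReal.ofReal (x^2) * h x ∂ν = ∫⁻ x in Ioi 0, h x * Jf ν k x)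
    (hN : (1 + α) / 2 < ν.real univ) : Integrable (fun x => x ^ (-α)) ν := by
  have hα0 := D.α0
  obtain ⟨δ, hδ, hδN⟩ : ∃ δ > 0, (1 + α) / 2 < ν.real (Ioi δ) := by
    have t := (ENNReal.tendsto_toReal (measure_ne_top ν univ)).comp D.tail_sup
    have := t.eventually (lt_mem_nhds hN)
    obtain ⟨n, hn⟩ := this.exists
    exact ⟨1/((n:ℝ)+1), by positivity, hn⟩
  set ν' := ν.withDensity (fun x => ENNReal.ofReal (x ^ (-α))) with hν'
  have hmeas : Measurable (fun x : ℝ => ENNReal.ofReal (x ^ (-α))) := by fun_prop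
  have t' : Tendsto (fun n : ℕ => ν' (Ioi (1/((n:ℝ)+1)))) atTop (𝓝 (ν' univ)) := by
    have h1 : ν' univ = ν' (⋃ n : ℕ, Ioi (1/((n:ℝ)+1))) := by
      apply measure_congr
      filter_upwards [(withDensity_absolutelyContinuous ν _).ae_le D.pos] with x hx
      apply propext
      refine ⟨fun _ => ?_, fun _ => trivial⟩
      obtain ⟨n, hn⟩ := exists_nat_one_div_lt hx
      exact mem_iUnion.2 ⟨n, hn⟩
    rw [h1]
    apply tendsto_measure_iUnion_atTop
    intro m n hmn
    apply Ioi_subset_Ioi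
    have : (m:ℝ) ≤ n := by exact_mod_cast hmn
    gcongr
  have hb : ν' univ ≤ _ := le_of_tendsto' t' (fun n => by
    rw [hν', withDensity_apply _ measurableSet_Ioi]
    exact D.neg_trunc HE hδ hδN (by positivity))
  rw [hν', withDensity_apply _ MeasurableSet.univ, Measure.restrict_univ] at hb
  refine ⟨by fun_prop, ?_⟩
  rw [hasFiniteIntegral_iff_ofReal (by filter_upwards [D.pos] with x hx; positivity)]
  exact hb.trans_lt ENNReal.ofReal_lt_top

end CoagData

lemma rpow_div_eq {y z α : ℝ} (hy : 0 < y) (hz : 0 < z) : (y / z) ^ α = y ^ α * z ^ (-α) := by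
  rw [div_rpow hy.le hz.le, rpow_neg hz.le]; rfl

lemma rpow_le_one_add {z α : ℝ} (hz : 0 < z) (h0 : 0 < α) (h1 : α < 1) : z ^ α ≤ 1 + z := by
  rcases le_total z 1 with h | h
  · have := rpow_le_one hz.le h h0.le; linarith
  · have := rpow_le_rpow_of_exponent_le h h1.le
    rw [rpow_one] at this; linarith

lemma ftc_aux {Φ : ℝ → ℝ≥0∞} {a : ℝ → ℝ} (hc : ContinuousOn a (Ioi 0))
    (h0 : ∀ x, 0 < x → 0 ≤ a x)
    (hΦ : ∀ x, 0 < x → Φ x = ∫⁻ y in Ioc 0 x, ENNReal.ofReal (a y))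
    (hfin : ∀ x, 0 < x → Φ x ≠ ∞) {x : ℝ} (hx : 0 < x) :
    DifferentiableAt ℝ (fun t => (Φ t).toReal) x := by
  have hm : ∀ t, AEStronglyMeasurable a (volume.restrict (Ioc 0 t)) := fun t =>
    (hc.mono (fun y hy => hy.1)).aestronglyMeasurable measurableSet_Ioc
  have hnn : ∀ t, 0 ≤ᵐ[volume.restrict (Ioc 0 t)] a := fun t => by
    filter_upwards [ae_restrict_mem measurableSet_Ioc] with y hy using h0 y hy.1
  have hi : ∀ t, 0 < t → IntegrableOn a (Ioc 0 t) := by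
    intro t ht
    refine ⟨hm t, ?_⟩
    rw [hasFiniteIntegral_iff_ofReal (hnn t), ← hΦ t ht]
    exact (hfin t ht).lt_top
  have heq : (fun t => (Φ t).toReal) =ᶠ[𝓝 x] fun t => ∫ y in (0:ℝ)..t, a y := by
    filter_upwards [Ioi_mem_nhds hx] with t ht
    rw [intervalIntegral.integral_of_le (le_of_lt ht), hΦ t ht,
      integral_eq_lintegral_of_nonneg_ae (hnn t) (hm t)]
  apply DifferentiableAt.congr_of_eventuallyEq _ heq
  refine (intervalIntegral.integral_hasDerivAt_right ?_ ?_ ?_).differentiableAt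
  · exact (intervalIntegrable_iff_integrableOn_Ioc_of_le hx.le).2 (hi x hx)
  · exact hc.stronglyMeasurableAtFilter isOpen_Ioi x hx
  · exact hc.continuousAt (Ioi_mem_nhds hx)

namespace CoagData

set_option linter.unusedSectionVars false

variable {α ε : ℝ} {ν : Measure ℝ} {k : ℝ → ℝ → ℝ} [IsFiniteMeasure ν]

lemma int_bd (D : CoagData α ε ν k) (hneg : Integrable (fun x => x ^ (-α)) ν) (c0 c1 c2 : ℝ) :
    Integrable (fun z => c0 + ε * (c1 * z ^ (-α) + c2 * (1 + z))) ν :=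
  (integrable_const _).add (((hneg.const_mul c1).add
    (((integrable_const _).add D.int_id).const_mul c2)).const_mul ε)

lemma th_bound (D : CoagData α ε ν k) {X y z : ℝ} (hX : y < X) (hy : 0 < y) (hz : 0 < z) :
    y * k y z ≤ 2 * X + ε * (X ^ (1 + α) * z ^ (-α) + X ^ (1 - α) * (1 + z)) := by
  have hα := D.α1
  have hα0 := D.α0
  have hε := D.ε0
  have hX0 : 0 < X := hy.trans hX
  have h1 := mul_le_mul_of_nonneg_left (D.up y z hy hz) hy.le
  have e1 : y * (y / z) ^ α = y ^ (1 + α) * z ^ (-α) := by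
    rw [rpow_div_eq hy hz, rpow_add hy, rpow_one]; ring
  have e2 : y * (z / y) ^ α = y ^ (1 - α) * z ^ α := by
    rw [rpow_div_eq hz hy, sub_eq_add_neg, rpow_add hy, rpow_one]; ring
  have b1 : y ^ (1 + α) * z ^ (-α) ≤ X ^ (1 + α) * z ^ (-α) := by
    have := rpow_le_rpow hy.le hX.le (by linarith : 0 ≤ 1 + α)
    gcongr
  have b2 : y ^ (1 - α) * z ^ α ≤ X ^ (1 - α) * (1 + z) := by
    have := rpow_le_rpow hy.le hX.le (by linarith : 0 ≤ 1 - α)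
    have := rpow_le_one_add hz hα0 hα
    gcongr
  have := mul_le_mul_of_nonneg_left (add_le_add b1 b2) hε.le
  calc _ ≤ _ := h1
    _ = 2 * y + ε * (y * (y / z) ^ α + y * (z / y) ^ α) := by ring
    _ = 2 * y + ε * (y ^ (1 + α) * z ^ (-α) + y ^ (1 - α) * z ^ α) := by rw [e1, e2]
    _ ≤ _ := by linarith

lemma int_bd_prod (D : CoagData α ε ν k) (hneg : Integrable (fun x => x ^ (-α)) ν)
    (c0 c1 c2 : ℝ) :
    Integrable (fun p : ℝ × ℝ => c0 + ε * (c1 * p.2 ^ (-α) + c2 * (1 + p.2))) (ν.prod ν) :=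
  (D.int_bd hneg c0 c1 c2).comp_snd ν

lemma phi1_fin (D : CoagData α ε ν k) (hneg : Integrable (fun x => x ^ (-α)) ν) (X : ℝ) :
    ∫⁻ p, (if p.1 < X then th k p else 0) ∂(ν.prod ν) ≠ ∞ := by
  have hI := D.int_bd_prod hneg (2 * X) (X ^ (1 + α)) (X ^ (1 - α))
  refine ne_top_of_le_ne_top hI.2.ne ?_
  apply lintegral_mono_ae
  filter_upwards [D.pos_prod] with p hp
  split_ifs with h
  · unfold th
    rw [← ofReal_norm]
    apply ENNReal.ofReal_le_ofReal
    exact (D.th_bound h hp.1 hp.2).trans (le_abs_self _)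
  · exact zero_le

lemma j_fin (D : CoagData α ε ν k) (hneg : Integrable (fun x => x ^ (-α)) ν) (X : ℝ) :
    Jf ν k X ≠ ∞ := by
  refine ne_top_of_le_ne_top (D.phi1_fin hneg X) ?_
  apply lintegral_mono
  intro p
  dsimp only
  split_ifs with h1 h2 h2
  · exact le_rfl
  · exact absurd h1.1 h2
  · exact zero_le
  · exact zero_le

lemma ae_sum_ne [NullSingletonClass ν] (x : ℝ) : ∀ᵐ p ∂(ν.prod ν), p.1 + p.2 ≠ x := by
  rw [ae_iff]
  have : MeasurableSet {p : ℝ × ℝ | ¬ p.1 + p.2 ≠ x} := by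
    simp only [not_not]
    exact measurableSet_eq_fun (by fun_prop) (by fun_prop)
  rw [Measure.measure_prod_null this]
  filter_upwards with y
  have : Prod.mk y ⁻¹' {p : ℝ × ℝ | ¬ p.1 + p.2 ≠ x} ⊆ {x - y} := by
    intro z hz
    simp only [not_not, mem_preimage, mem_ofPred_eq] at hz
    simp only [mem_singleton_iff]; linarith
  exact measure_mono_null this (by simp)

lemma ae_diag_ne [NullSingletonClass ν] : ∀ᵐ p ∂(ν.prod ν), p.1 ≠ p.2 := by
  rw [ae_iff]
  have : MeasurableSet {p : ℝ × ℝ | ¬ p.1 ≠ p.2} := by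
    simp only [not_not]
    exact measurableSet_eq_fun (by fun_prop) (by fun_prop)
  rw [Measure.measure_prod_null this]
  filter_upwards with y
  have : Prod.mk y ⁻¹' {p : ℝ × ℝ | ¬ p.1 ≠ p.2} ⊆ {y} := by
    intro z hz
    simp only [not_not, mem_preimage, mem_ofPred_eq] at hz
    simp only [mem_singleton_iff]; exact hz.symm
  exact measure_mono_null this (by simp)

lemma j_cont [NullSingletonClass ν] (D : CoagData α ε ν k) (hneg : Integrable (fun x => x ^ (-α)) ν) (x₀ : ℝ) :
    ContinuousAt (fun x => (Jf ν k x).toReal) x₀ := by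
  have hm := D.meas
  have hF : (fun x => (Jf ν k x).toReal) = fun x =>
      ∫ p, (if p.1 < x ∧ x < p.1 + p.2 then p.1 * k p.1 p.2 else 0) ∂(ν.prod ν) := by
    funext x
    rw [integral_eq_lintegral_of_nonneg_ae]
    · unfold Jf
      congr 2
      funext p
      unfold th
      split_ifs <;> simp
    · filter_upwards [D.pos_prod] with p hp
      have := D.low p.1 p.2
      have h1 := hp.1
      simp only [Pi.zero_apply]
      split_ifs
      · apply mul_nonneg <;> linarith
      · exact le_rfl
    · apply Measurable.aestronglyMeasurable
      refine Measurable.ite ?_ (measurable_fst.mul hm) measurable_const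
      exact (measurableSet_lt measurable_fst measurable_const).inter
        (measurableSet_lt measurable_const (measurable_fst.add measurable_snd))
  rw [hF]
  have hI := D.int_bd_prod hneg (2 * (x₀+1)) ((x₀+1) ^ (1 + α)) ((x₀+1) ^ (1 - α))
  refine continuousAt_of_dominated (F := fun x (p : ℝ × ℝ) => if p.1 < x ∧ x < p.1 + p.2 then p.1 * k p.1 p.2 else 0) (bound := fun p => |2 * (x₀+1) + ε * ((x₀+1) ^ (1 + α) *
    p.2 ^ (-α) + (x₀+1) ^ (1 - α) * (1 + p.2))|) ?_ ?_ hI.abs ?_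
  · filter_upwards with x
    apply Measurable.aestronglyMeasurable
    refine Measurable.ite ?_ (measurable_fst.mul hm) measurable_const
    exact (measurableSet_lt measurable_fst measurable_const).inter
      (measurableSet_lt measurable_const (measurable_fst.add measurable_snd))
  · filter_upwards [Iio_mem_nhds (show x₀ < x₀ + 1 by linarith)] with x hx
    filter_upwards [D.pos_prod] with p hp
    split_ifs with h
    · have := D.low p.1 p.2
      have h1 := hp.1
      rw [norm_of_nonneg (by apply mul_nonneg <;> linarith)]
      exact (D.th_bound (h.1.trans hx) hp.1 hp.2).trans (le_abs_self _)
    · rw [norm_zero]; exact abs_nonneg _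
  · have hne := Measure.quasiMeasurePreserving_fst (μ := ν) (ν := ν) |>.ae
      (show ∀ᵐ y ∂ν, y ≠ x₀ by rw [ae_iff]; simp)
    filter_upwards [hne, ae_sum_ne x₀] with p h1 h2
    have c1 : ∀ᶠ x in 𝓝 x₀, (p.1 < x ↔ p.1 < x₀) := by
      rcases lt_or_gt_of_ne h1 with h | h
      · filter_upwards [Ioi_mem_nhds h] with x hx
        exact ⟨fun _ => h, fun _ => hx⟩
      · filter_upwards [Iio_mem_nhds h] with x hx
        exact ⟨fun h' => absurd h' (not_lt.2 (le_of_lt hx)), fun h' => absurd h' (not_lt.2 h.le)⟩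
    have c2 : ∀ᶠ x in 𝓝 x₀, (x < p.1 + p.2 ↔ x₀ < p.1 + p.2) := by
      rcases lt_or_gt_of_ne h2 with h | h
      · filter_upwards [Ioi_mem_nhds h] with x hx
        exact ⟨fun h' => absurd h' (not_lt.2 (le_of_lt hx)), fun h' => absurd h' (not_lt.2 h.le)⟩
      · filter_upwards [Iio_mem_nhds h] with x hx
        exact ⟨fun _ => h, fun _ => hx⟩
    apply ContinuousAt.congr (continuousAt_const
      (y := if p.1 < x₀ ∧ x₀ < p.1 + p.2 then p.1 * k p.1 p.2 else 0))
    filter_upwards [c1, c2] with x h1 h2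
    simp only [h1, h2]

end CoagData

namespace CoagData

set_option linter.unusedSectionVars false

variable {α ε : ℝ} {ν : Measure ℝ} {k : ℝ → ℝ → ℝ}

lemma k_bound (D : CoagData α ε ν k) {u v y z : ℝ} (hu : 0 < u) (h1 : u ≤ y) (h2 : y ≤ v)
    (hz : 0 < z) :
    k y z ≤ 2 + ε * (v ^ α * z ^ (-α) + u ^ (-α) * (1 + z)) := by
  have hy : 0 < y := hu.trans_le h1
  have hε := D.ε0
  have h0 := D.α0
  refine (D.up y z hy hz).trans ?_
  rw [rpow_div_eq hy hz, rpow_div_eq hz hy]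
  have a1 : y ^ α ≤ v ^ α := rpow_le_rpow hy.le h2 h0.le
  have a2 : y ^ (-α) ≤ u ^ (-α) := rpow_le_rpow_of_nonpos hu h1 (by linarith)
  have a3 := rpow_le_one_add hz h0 D.α1
  have a4 : z ^ α * y ^ (-α) ≤ u ^ (-α) * (1 + z) := by
    rw [mul_comm]; gcongr
  gcongr

lemma k_norm (D : CoagData α ε ν k) {u v y z : ℝ} (hu : 0 < u) (h1 : u ≤ y) (h2 : y ≤ v)
    (hz : 0 < z) :
    ‖k y z‖ ≤ 2 + ε * (v ^ α * z ^ (-α) + u ^ (-α) * (1 + z)) := by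
  rw [norm_of_nonneg (by linarith [D.low y z])]
  exact D.k_bound hu h1 h2 hz

variable {f : ℝ → ℝ}

lemma lint_nu (hfm : Measurable f)
    (hν : ν = (volume.restrict (Ioi 0)).withDensity (fun x => ENNReal.ofReal (f x)))
    (h : ℝ → ℝ≥0∞) : ∫⁻ x, h x ∂ν = ∫⁻ x in Ioi 0, ENNReal.ofReal (f x) * h x := by
  conv_lhs => rw [hν]
  rw [lintegral_withDensity_eq_lintegral_mul_non_measurable _ hfm.ennreal_ofReal]
  · rfl
  · exact ae_of_all _ fun x => ENNReal.ofReal_lt_top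

variable [IsFiniteMeasure ν]

lemma k_meas (D : CoagData α ε ν k) (y : ℝ) : Measurable (k y) :=
  D.meas.comp (measurable_const.prodMk measurable_id)

lemma k_int (D : CoagData α ε ν k) (hneg : Integrable (fun x => x ^ (-α)) ν) {y : ℝ}
    (hy : 0 < y) : Integrable (k y) ν := by
  refine (D.int_bd hneg 2 (y ^ α) (y ^ (-α))).mono' (D.k_meas y).aestronglyMeasurable ?_
  filter_upwards [D.pos] with z hz
  exact D.k_norm hy le_rfl le_rfl hz

lemma cont_a (D : CoagData α ε ν k) (hneg : Integrable (fun x => x ^ (-α)) ν)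
    (kc : ContinuousOn (fun p : ℝ × ℝ => k p.1 p.2) (Ioi 0 ×ˢ Ioi 0)) :
    ContinuousOn (fun y => ∫ z, k y z ∂ν) (Ioi 0) := by
  intro y hy
  have hy : 0 < y := hy
  apply ContinuousAt.continuousWithinAt
  refine continuousAt_of_dominated (F := fun y z => k y z) (bound := fun z =>
    2 + ε * ((2 * y) ^ α * z ^ (-α) + (y / 2) ^ (-α) * (1 + z))) ?_ ?_ (D.int_bd hneg _ _ _) ?_
  · filter_upwards with t using (D.k_meas t).aestronglyMeasurable
  · filter_upwards [Ioo_mem_nhds (show y / 2 < y by linarith) (show y < 2 * y by linarith)] with t ht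
    filter_upwards [D.pos] with z hz
    exact D.k_norm (by linarith) ht.1.le ht.2.le hz
  · filter_upwards [D.pos] with z hz
    have h := kc.continuousAt (x := (y, z))
      ((isOpen_Ioi.prod isOpen_Ioi).mem_nhds ⟨hy, hz⟩)
    exact h.comp (f := fun t : ℝ => (t, z)) (by fun_prop)

lemma phi1_eq (D : CoagData α ε ν k) (hneg : Integrable (fun x => x ^ (-α)) ν)
    (hfm : Measurable f) (hf0 : ∀ x, 0 ≤ f x)
    (hν : ν = (volume.restrict (Ioi 0)).withDensity (fun x => ENNReal.ofReal (f x)))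
    (x : ℝ) :
    ∫⁻ p, (if p.1 < x then th k p else 0) ∂(ν.prod ν) =
      ∫⁻ y in Ioc 0 x, ENNReal.ofReal (f y * (y * ∫ z, k y z ∂ν)) := by
  rw [lintegral_prod _ (Measurable.aemeasurable
    (Measurable.ite (measurableSet_lt measurable_fst measurable_const) D.meas_th measurable_const)),
    lint_nu hfm hν, ← restrict_Ioo_eq_restrict_Ioc, ← lintegral_indicator measurableSet_Ioi,
    ← lintegral_indicator measurableSet_Ioo]
  congr 1
  funext y
  by_cases hy : 0 < y
  · rw [indicator_of_mem (show y ∈ Ioi 0 from hy)]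
    by_cases hx : y < x
    · rw [indicator_of_mem (show y ∈ Ioo 0 x from ⟨hy, hx⟩), ENNReal.ofReal_mul (hf0 y)]
      simp only [hx, if_true]
      congr 1
      rw [← integral_const_mul, ofReal_integral_eq_lintegral_ofReal]
      · rfl
      · exact (D.k_int hneg hy).const_mul y
      · exact ae_of_all _ fun z => mul_nonneg hy.le (by linarith [D.low y z])
    · rw [indicator_of_notMem (show y ∉ Ioo 0 x from fun h => hx h.2)]
      simp [hx]
  · rw [indicator_of_notMem (show y ∉ Ioi 0 from hy),
      indicator_of_notMem (show y ∉ Ioo 0 x from fun h => hy h.1)]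

/-- integrand of the gain density -/
noncomputable def Bf (f : ℝ → ℝ) (k : ℝ → ℝ → ℝ) (s y : ℝ) : ℝ :=
  if 2 * y < s then f (s - y) * (s * k y (s - y)) else 0

lemma bf_meas (D : CoagData α ε ν k) (hfm : Measurable f) :
    Measurable (fun p : ℝ × ℝ => Bf f k p.1 p.2) := by
  unfold Bf
  have hk := D.meas
  refine Measurable.ite (measurableSet_lt (by fun_prop) measurable_fst) ?_ measurable_const
  refine (hfm.comp (measurable_fst.sub measurable_snd)).mul (measurable_fst.mul ?_)
  exact hk.comp (measurable_snd.prodMk (measurable_fst.sub measurable_snd))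

lemma bf_nonneg (D : CoagData α ε ν k) (hf0 : ∀ x, 0 ≤ f x) {s y : ℝ} (hs : 0 ≤ s) :
    0 ≤ Bf f k s y := by
  unfold Bf
  split_ifs
  · have := D.low y (s - y)
    exact mul_nonneg (hf0 _) (mul_nonneg hs (by linarith))
  · exact le_rfl

lemma bf_bound (D : CoagData α ε ν k) (hf0 : ∀ x, 0 ≤ f x) {s₀ C : ℝ} (hs₀ : 0 < s₀)
    (hC : ∀ x ∈ Icc (s₀ / 4) (2 * s₀), f x ≤ C) {s y : ℝ} (h1 : s₀ / 2 < s) (h2 : s < 2 * s₀)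
    (hy : 0 < y) :
    ‖Bf f k s y‖ ≤ C * (2 * s₀ * (2 + ε * (1 + (2 * s₀) ^ α * y ^ (-α)))) := by
  have hs : 0 < s := by linarith
  have hε := D.ε0
  have h0 := D.α0
  have hC0 : 0 ≤ C := (hf0 s₀).trans (hC s₀ ⟨by linarith, by linarith⟩)
  rw [norm_of_nonneg (D.bf_nonneg hf0 hs.le)]
  unfold Bf
  split_ifs with h
  · have hz : 0 < s - y := by linarith
    have hl := D.low y (s - y)
    have e1 : f (s - y) ≤ C := hC _ ⟨by linarith, by linarith⟩
    have e2 : k y (s - y) ≤ 2 + ε * (1 + (2 * s₀) ^ α * y ^ (-α)) := by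
      refine (D.up y _ hy hz).trans ?_
      have a1 : (y / (s - y)) ^ α ≤ 1 := by
        apply rpow_le_one (by positivity) _ h0.le
        rw [div_le_one hz]; linarith
      have a2 : ((s - y) / y) ^ α ≤ (2 * s₀) ^ α * y ^ (-α) := by
        rw [rpow_div_eq hz hy]
        have := rpow_le_rpow hz.le (show s - y ≤ 2 * s₀ by linarith) h0.le
        gcongr
      gcongr
    have : 0 ≤ k y (s - y) := by linarith
    gcongr
  · positivity

lemma bf_bound_int (_D : CoagData α ε ν k) (hneg : Integrable (fun x => x ^ (-α)) ν) (C s₀ : ℝ) :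
    Integrable (fun y => C * (2 * s₀ * (2 + ε * (1 + (2 * s₀) ^ α * y ^ (-α))))) ν :=
  (((integrable_const _).add (((integrable_const _).add
    (hneg.const_mul _)).const_mul ε)).const_mul _).const_mul _

lemma exC (hf : ContinuousOn f (Ioi 0)) {s₀ : ℝ} (hs₀ : 0 < s₀) :
    ∃ C, ∀ x ∈ Icc (s₀ / 4) (2 * s₀), f x ≤ C := by
  have : IsCompact (Icc (s₀ / 4) (2 * s₀)) := isCompact_Icc
  obtain ⟨C, hC⟩ := (this.bddAbove_image (f := f) (hf.mono fun x hx =>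
    show 0 < x by linarith [hx.1]))
  exact ⟨C, fun x hx => hC ⟨x, hx, rfl⟩⟩

lemma bf_s_meas (D : CoagData α ε ν k) (hfm : Measurable f) (s : ℝ) :
    Measurable (Bf f k s) :=
  (D.bf_meas hfm).comp (measurable_const.prodMk measurable_id)

lemma bf_int (D : CoagData α ε ν k) (hneg : Integrable (fun x => x ^ (-α)) ν)
    (hfm : Measurable f) (hf0 : ∀ x, 0 ≤ f x) (hf : ContinuousOn f (Ioi 0)) {s : ℝ} (hs : 0 < s) :
    Integrable (Bf f k s) ν := by
  obtain ⟨C, hC⟩ := exC hf hs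
  refine (D.bf_bound_int hneg C s).mono' (D.bf_s_meas hfm s).aestronglyMeasurable ?_
  filter_upwards [D.pos] with y hy
  exact D.bf_bound hf0 hs hC (by linarith) (by linarith) hy

lemma cont_b [NullSingletonClass ν] (D : CoagData α ε ν k)
    (hneg : Integrable (fun x => x ^ (-α)) ν)
    (kc : ContinuousOn (fun p : ℝ × ℝ => k p.1 p.2) (Ioi 0 ×ˢ Ioi 0))
    (hfm : Measurable f) (hf0 : ∀ x, 0 ≤ f x) (hf : ContinuousOn f (Ioi 0)) :
    ContinuousOn (fun s => ∫ y, Bf f k s y ∂ν) (Ioi 0) := by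
  intro s hs
  have hs : 0 < s := hs
  apply ContinuousAt.continuousWithinAt
  obtain ⟨C, hC⟩ := exC hf hs
  refine continuousAt_of_dominated (F := fun t y => Bf f k t y) ?_ ?_ (D.bf_bound_int hneg C s) ?_
  · filter_upwards with t using (D.bf_s_meas hfm t).aestronglyMeasurable
  · filter_upwards [Ioo_mem_nhds (show s / 2 < s by linarith) (show s < 2 * s by linarith)] with t ht
    filter_upwards [D.pos] with y hy
    exact D.bf_bound hf0 hs hC ht.1 ht.2 hy
  · filter_upwards [D.pos, show ∀ᵐ y ∂ν, y ≠ s / 2 by rw [ae_iff]; simp] with y hy hne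
    rcases lt_or_gt_of_ne (show 2 * y ≠ s by intro h; apply hne; linarith) with h | h
    · have hz : 0 < s - y := by linarith
      have hk := kc.continuousAt (x := (y, s - y))
        ((isOpen_Ioi.prod isOpen_Ioi).mem_nhds ⟨hy, hz⟩)
      have hk' : ContinuousAt (fun t => k y (t - y)) s :=
        ContinuousAt.comp (f := fun t : ℝ => (y, t - y)) (x := s) hk (by fun_prop)
      have hf' : ContinuousAt (fun t => f (t - y)) s :=
        ContinuousAt.comp (f := fun t : ℝ => t - y) (x := s)
          (hf.continuousAt (Ioi_mem_nhds hz)) (by fun_prop)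
      apply (hf'.mul (continuousAt_id.mul hk')).congr
      filter_upwards [Ioi_mem_nhds h] with t ht
      simp only [Bf, if_pos (show 2 * y < t from ht)]
      rfl
    · apply (continuousAt_const (y := (0:ℝ))).congr
      filter_upwards [Iio_mem_nhds h] with t ht
      simp only [Bf, if_neg (not_lt.2 (le_of_lt (show t < 2 * y from ht)))]

lemma phi2_eq [NullSingletonClass ν] (D : CoagData α ε ν k)
    (hneg : Integrable (fun x => x ^ (-α)) ν)
    (hfm : Measurable f) (hf0 : ∀ x, 0 ≤ f x) (hf : ContinuousOn f (Ioi 0))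
    (hν : ν = (volume.restrict (Ioi 0)).withDensity (fun x => ENNReal.ofReal (f x)))
    (x : ℝ) :
    ∫⁻ p, (if p.1 + p.2 ≤ x then th k p else 0) ∂(ν.prod ν) =
      ∫⁻ s in Ioc 0 x, ENNReal.ofReal (∫ y, Bf f k s y ∂ν) := by
  have hk := D.meas
  have hth := D.meas_th
  have hadd : Measurable (fun p : ℝ × ℝ => p.1 + p.2) := measurable_fst.add measurable_snd
  have S1 : MeasurableSet {p : ℝ × ℝ | p.1 + p.2 ≤ x ∧ p.1 < p.2} :=
    (measurableSet_le hadd measurable_const).inter (measurableSet_lt measurable_fst measurable_snd)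
  have S2 : MeasurableSet {p : ℝ × ℝ | p.1 + p.2 ≤ x ∧ p.2 < p.1} :=
    (measurableSet_le hadd measurable_const).inter (measurableSet_lt measurable_snd measurable_fst)
  have m1 : Measurable (fun p : ℝ × ℝ => if p.1 + p.2 ≤ x ∧ p.1 < p.2 then th k p else 0) :=
    Measurable.ite S1 hth measurable_const
  have m2 : Measurable (fun p : ℝ × ℝ => if p.1 + p.2 ≤ x ∧ p.2 < p.1 then th k p else 0) :=
    Measurable.ite S2 hth measurable_const
  have e1 : ∫⁻ p, (if p.1 + p.2 ≤ x then th k p else 0) ∂(ν.prod ν) =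
      ∫⁻ p, (if p.1 + p.2 ≤ x ∧ p.1 < p.2 then th k p else 0) ∂(ν.prod ν) +
      ∫⁻ p, (if p.1 + p.2 ≤ x ∧ p.2 < p.1 then th k p else 0) ∂(ν.prod ν) := by
    rw [← lintegral_add_left m1]
    apply lintegral_congr_ae
    filter_upwards [ae_diag_ne (ν := ν)] with p hp
    rcases lt_or_gt_of_ne hp with h | h
    · simp [h, h.not_gt]
    · simp [h, h.not_gt]
  have e2 : ∫⁻ p, (if p.1 + p.2 ≤ x ∧ p.2 < p.1 then th k p else 0) ∂(ν.prod ν) =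
      ∫⁻ p, (if p.1 + p.2 ≤ x ∧ p.1 < p.2 then th k p.swap else 0) ∂(ν.prod ν) := by
    rw [← lintegral_prod_swap]
    congr 1
    funext p
    simp only [Prod.fst_swap, Prod.snd_swap, add_comm p.2 p.1]
  have e3 : ∫⁻ p, (if p.1 + p.2 ≤ x then th k p else 0) ∂(ν.prod ν) =
      ∫⁻ p, (if p.1 + p.2 ≤ x ∧ p.1 < p.2 then
        ENNReal.ofReal ((p.1 + p.2) * k p.1 p.2) else 0) ∂(ν.prod ν) := by
    rw [e1, e2, ← lintegral_add_left m1]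
    apply lintegral_congr_ae
    filter_upwards [D.pos_prod] with p hp
    have hl := D.low p.1 p.2
    split_ifs
    · simp only [th, Prod.fst_swap, Prod.snd_swap]
      rw [D.symm p.2 p.1, ← ENNReal.ofReal_add (mul_nonneg hp.1.le (by linarith))
        (mul_nonneg hp.2.le (by linarith)), add_mul]
    · simp
  have m3 : Measurable (fun p : ℝ × ℝ => if p.1 + p.2 ≤ x ∧ p.1 < p.2 then
        ENNReal.ofReal ((p.1 + p.2) * k p.1 p.2) else 0) :=
    Measurable.ite S1 (hadd.mul hk).ennreal_ofReal measurable_const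
  rw [e3, lintegral_prod _ m3.aemeasurable]
  have e4 : ∀ᵐ y ∂ν, ∫⁻ z, (if y + z ≤ x ∧ y < z then
        ENNReal.ofReal ((y + z) * k y z) else 0) ∂ν =
      ∫⁻ s, (if 0 < s ∧ s ≤ x then ENNReal.ofReal (Bf f k s y) else 0) := by
    filter_upwards [D.pos] with y hy
    rw [lint_nu hfm hν, ← lintegral_indicator measurableSet_Ioi,
      ← lintegral_sub_right_eq_self _ y]
    congr 1
    funext s
    unfold Bf
    by_cases hs : 2 * y < s
    · rw [indicator_of_mem (show s - y ∈ Ioi 0 from show 0 < s - y by linarith)]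
      have c1 : y + (s - y) = s := by ring
      have c2 : y < s - y := by linarith
      have c3 : 0 < s := by linarith
      simp only [c1, c2, c3, hs, if_true, and_true, true_and]
      split_ifs
      · rw [ENNReal.ofReal_mul (hf0 _)]
      · simp
    · have c2 : ¬ (y < s - y) := by intro h; apply hs; linarith
      simp [hs, c2]
  rw [lintegral_congr_ae e4, lintegral_lintegral_swap, ← lintegral_indicator measurableSet_Ioc]
  · congr 1
    funext s
    by_cases hs : 0 < s ∧ s ≤ x
    · rw [indicator_of_mem (show s ∈ Ioc 0 x from hs)]
      simp only [if_pos hs]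
      rw [ofReal_integral_eq_lintegral_ofReal (D.bf_int hneg hfm hf0 hf hs.1)]
      exact ae_of_all _ fun y => D.bf_nonneg hf0 hs.1.le
    · rw [indicator_of_notMem (show s ∉ Ioc 0 x from hs)]
      simp only [if_neg hs]
      simp
  · apply Measurable.aemeasurable
    refine Measurable.ite (p := fun p : ℝ × ℝ => 0 < p.2 ∧ p.2 ≤ x)
      ((measurableSet_lt measurable_const measurable_snd).inter
      (measurableSet_le measurable_snd measurable_const)) ?_ measurable_const
    exact ((D.bf_meas hfm).comp measurable_swap).ennreal_ofReal

lemma phi2_fin (D : CoagData α ε ν k) (hneg : Integrable (fun x => x ^ (-α)) ν) (X : ℝ) :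
    ∫⁻ p, (if p.1 + p.2 ≤ X then th k p else 0) ∂(ν.prod ν) ≠ ∞ := by
  refine ne_top_of_le_ne_top (D.phi1_fin hneg X) ?_
  apply lintegral_mono_ae
  filter_upwards [D.pos_prod] with p hp
  have := hp.2
  split_ifs with h1 h2 h2
  · exact le_rfl
  · exact absurd (by linarith) h2
  · exact zero_le
  · exact zero_le

lemma j_add (D : CoagData α ε ν k) (x : ℝ) :
    Jf ν k x + ∫⁻ p, (if p.1 + p.2 ≤ x then th k p else 0) ∂(ν.prod ν) =
      ∫⁻ p, (if p.1 < x then th k p else 0) ∂(ν.prod ν) := by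
  unfold Jf
  rw [← lintegral_add_right]
  · apply lintegral_congr_ae
    filter_upwards [D.pos_prod] with p hp
    have := hp.2
    by_cases h1 : p.1 + p.2 ≤ x
    · simp [h1, show p.1 < x by linarith, not_lt.2 h1]
    · simp [h1, not_le.1 h1]
  · exact Measurable.ite (measurableSet_le (measurable_fst.add measurable_snd) measurable_const)
      D.meas_th measurable_const

lemma j_diff [NullSingletonClass ν] (D : CoagData α ε ν k)
    (hneg : Integrable (fun x => x ^ (-α)) ν)
    (kc : ContinuousOn (fun p : ℝ × ℝ => k p.1 p.2) (Ioi 0 ×ˢ Ioi 0))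
    {g : ℝ → ℝ≥0∞}
    (hν : ν = (volume.restrict (Ioi 0)).withDensity g)
    (hg : ∀ᵐ x ∂(volume.restrict (Ioi (0:ℝ))), ENNReal.ofReal (x ^ 2) * g x = Jf ν k x)
    {x : ℝ} (hx : 0 < x) :
    DifferentiableAt ℝ (fun t => (Jf ν k t).toReal) x := by
  obtain ⟨f, hfd⟩ : ∃ f : ℝ → ℝ, f = fun x => (Jf ν k x).toReal / x ^ 2 := ⟨_, rfl⟩
  have hfm : Measurable f := by
    rw [hfd]
    exact D.measurable_Jf.ennreal_toReal.div (by fun_prop)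
  have hf0 : ∀ x, 0 ≤ f x := fun x => by rw [hfd]; positivity
  have hf : ContinuousOn f (Ioi 0) := by
    rw [hfd]
    intro y hy
    have hy : 0 < y := hy
    exact ((D.j_cont hneg y).div (by fun_prop) (by positivity)).continuousWithinAt
  have hν' : ν = (volume.restrict (Ioi 0)).withDensity (fun x => ENNReal.ofReal (f x)) := by
    conv_lhs => rw [hν]
    apply withDensity_congr_ae
    filter_upwards [hg, ae_restrict_mem measurableSet_Ioi] with y hy hy0
    have hy0 : 0 < y := hy0
    have h2 : 0 < y ^ 2 := by positivity
    rw [hfd]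
    simp only
    rw [ENNReal.ofReal_div_of_pos h2, ENNReal.ofReal_toReal (D.j_fin hneg y), ← hy,
      ENNReal.eq_div_iff (by simpa using h2.ne') ENNReal.ofReal_ne_top]
  have d1 := ftc_aux (Φ := fun x => ∫⁻ p, (if p.1 < x then th k p else 0) ∂(ν.prod ν))
    (hf.mul (continuousOn_id.mul (D.cont_a hneg kc)))
    (fun y hy => mul_nonneg (hf0 y) (mul_nonneg hy.le (integral_nonneg fun z => by
      have := D.low y z
      simp only [Pi.zero_apply]; linarith)))
    (fun y _ => D.phi1_eq hneg hfm hf0 hν' y) (fun y _ => D.phi1_fin hneg y) hx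
  have d2 := ftc_aux (Φ := fun x => ∫⁻ p, (if p.1 + p.2 ≤ x then th k p else 0) ∂(ν.prod ν))
    (D.cont_b hneg kc hfm hf0 hf)
    (fun y hy => integral_nonneg fun z => D.bf_nonneg hf0 hy.le)
    (fun y _ => D.phi2_eq hneg hfm hf0 hf hν' y) (fun y _ => D.phi2_fin hneg y) hx
  have : (fun t => (Jf ν k t).toReal) = fun t =>
      (∫⁻ p, (if p.1 < t then th k p else 0) ∂(ν.prod ν)).toReal -
      (∫⁻ p, (if p.1 + p.2 ≤ t then th k p else 0) ∂(ν.prod ν)).toReal := by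
    funext t
    rw [← D.j_add t, ENNReal.toReal_add (D.j_fin hneg t) (D.phi2_fin hneg t)]
    ring
  rw [this]
  exact d1.sub d2

end CoagData

namespace CoagData

variable {α ε : ℝ} {ν : Measure ℝ} {k : ℝ → ℝ → ℝ}

lemma h_fin (D : CoagData α ε ν k) {t y : ℝ} (hy : 0 < y) :
    ∫⁻ z, (if y < t ∧ t < y + z then th k (y, z) else 0) ∂ν ≠ ∞ := by
  by_cases hyt : y < t
  swap
  · simp [hyt]
  obtain ⟨a, ha⟩ : ∃ a, a = t - y := ⟨_, rfl⟩
  have ha0 : 0 < a := by linarith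
  have hε := D.ε0
  have hα := D.α0
  obtain ⟨A, hA⟩ : ∃ A, A = 2 + ε * (y ^ α * a ^ (-α) + y ^ (-α)) := ⟨_, rfl⟩
  have hA0 : 0 ≤ A := by rw [hA]; positivity
  obtain ⟨c, hc⟩ : ∃ c, c = y * (A / a + ε * y ^ (-α)) := ⟨_, rfl⟩
  have hc0 : 0 ≤ c := by rw [hc]; positivity
  have : ∫⁻ z, (if y < t ∧ t < y + z then th k (y, z) else 0) ∂ν ≤
      ∫⁻ z, ENNReal.ofReal c * ENNReal.ofReal z ∂ν := by
    apply lintegral_mono_ae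
    filter_upwards [D.pos] with z hz
    split_ifs with h
    · rw [← ENNReal.ofReal_mul hc0]
      apply ENNReal.ofReal_le_ofReal
      simp only
      have haz : a ≤ z := by linarith [h.2]
      have h1 := D.k_bound hy le_rfl le_rfl hz
      have h2 : z ^ (-α) ≤ a ^ (-α) := rpow_le_rpow_of_nonpos ha0 haz (by linarith)
      have h3 : A ≤ A / a * z := by
        rw [div_mul_eq_mul_div, le_div_iff₀ ha0]
        gcongr
      rw [hc, mul_assoc]
      gcongr
      calc k y z ≤ _ := h1
        _ ≤ 2 + ε * (y ^ α * a ^ (-α) + y ^ (-α) * (1 + z)) := by gcongr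
        _ = A + ε * y ^ (-α) * z := by rw [hA]; ring
        _ ≤ _ := by linarith
    · exact zero_le
  refine ne_top_of_le_ne_top ?_ this
  rw [lintegral_const_mul _ (by fun_prop), D.mass]
  simp

lemma t_eq [SFinite ν] (D : CoagData α ε ν k) {K : ℝ → ℝ → ℝ} {φ ψ : ℝ → ℝ}
    (hψm : Measurable ψ) (hψ0 : ∀ x, 0 ≤ ψ x)
    (hν : ν = (volume.restrict (Ioi 0)).withDensity (fun x => ENNReal.ofReal (ψ x)))
    (hφ : φ =ᵐ[volume.restrict (Ioi 0)] ψ)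
    (hK : ∀ y z, 0 < y → 0 < z → k y z = K y z) (t : ℝ) :
    ∫ y in Ioo 0 t, ∫ z in Ioi (t - y), y * K y z * φ y * φ z = (Jf ν k t).toReal := by
  obtain ⟨H, hH⟩ : ∃ H : ℝ → ℝ≥0∞, H = fun y =>
    ∫⁻ z, (if y < t ∧ t < y + z then th k (y, z) else 0) ∂ν := ⟨_, rfl⟩
  have mJ : Measurable (fun p : ℝ × ℝ => if p.1 < t ∧ t < p.1 + p.2 then th k p else 0) :=
    Measurable.ite ((measurableSet_lt measurable_fst measurable_const).inter
      (measurableSet_lt measurable_const (measurable_fst.add measurable_snd)))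
      D.meas_th measurable_const
  have mH : Measurable H := by
    rw [hH]; exact mJ.lintegral_prod_right'
  have eJ : Jf ν k t = ∫⁻ y in Ioo 0 t, ENNReal.ofReal (ψ y) * H y := by
    unfold Jf
    rw [lintegral_prod _ mJ.aemeasurable, lint_nu hψm hν, ← lintegral_indicator measurableSet_Ioi,
      ← lintegral_indicator measurableSet_Ioo, hH]
    congr 1
    funext y
    by_cases hy : 0 < y
    · rw [indicator_of_mem (show y ∈ Ioi 0 from hy)]
      by_cases hx : y < t
      · rw [indicator_of_mem (show y ∈ Ioo 0 t from ⟨hy, hx⟩)]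
      · rw [indicator_of_notMem (show y ∉ Ioo 0 t from fun h => hx h.2)]
        simp [hx]
    · rw [indicator_of_notMem (show y ∉ Ioi 0 from hy),
        indicator_of_notMem (show y ∉ Ioo 0 t from fun h => hy h.1)]
  have hin : ∀ᵐ y ∂(volume.restrict (Ioo 0 t)),
      ∫ z in Ioi (t - y), y * K y z * φ y * φ z = (ENNReal.ofReal (ψ y) * H y).toReal := by
    have hφ' : φ =ᵐ[volume.restrict (Ioo 0 t)] ψ :=
      ae_restrict_of_ae_restrict_of_subset (fun y hy => hy.1) hφ
    filter_upwards [hφ', ae_restrict_mem measurableSet_Ioo] with y hy hyt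
    have hy0 : 0 < y := hyt.1
    have hφz : φ =ᵐ[volume.restrict (Ioi (t - y))] ψ :=
      ae_restrict_of_ae_restrict_of_subset
        (fun z hz => show 0 < z by have : t - y < z := hz; linarith [hyt.2]) hφ
    have e1 : ∫ z in Ioi (t - y), y * K y z * φ y * φ z =
        ∫ z in Ioi (t - y), ψ y * (ψ z * (y * k y z)) := by
      apply integral_congr_ae
      filter_upwards [hφz, ae_restrict_mem measurableSet_Ioi] with z hz hz'
      have : t - y < z := hz'
      rw [hz, hy, hK y z hy0 (by linarith [hyt.2])]
      ring
    rw [e1, integral_const_mul, ENNReal.toReal_mul, ENNReal.toReal_ofReal (hψ0 y)]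
    congr 1
    have mk : Measurable (k y) := D.meas.comp (measurable_const.prodMk measurable_id)
    rw [integral_eq_lintegral_of_nonneg_ae
      (ae_of_all _ fun z => mul_nonneg (hψ0 z) (mul_nonneg hy0.le (by linarith [D.low y z])))
      (hψm.mul (mk.const_mul y)).aestronglyMeasurable]
    congr 1
    rw [hH]
    simp only
    rw [lint_nu hψm hν, ← lintegral_indicator measurableSet_Ioi,
      ← lintegral_indicator measurableSet_Ioi]
    congr 1
    funext z
    by_cases hz : t - y < z
    · rw [indicator_of_mem (show z ∈ Ioi (t - y) from hz),
        indicator_of_mem (show z ∈ Ioi 0 from show 0 < z by linarith [hyt.2]),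
        if_pos ⟨hyt.2, by linarith⟩, ENNReal.ofReal_mul (hψ0 z)]
      rfl
    · rw [indicator_of_notMem (show z ∉ Ioi (t - y) from hz)]
      have : ¬ (t < y + z) := by intro h; apply hz; linarith
      rw [indicator_apply, if_neg (fun h : y < t ∧ t < y + z => this h.2)]
      simp
  rw [integral_congr_ae hin, integral_toReal (f := fun y => ENNReal.ofReal (ψ y) * H y)
    (hψm.ennreal_ofReal.mul mH).aemeasurable, eJ]
  · filter_upwards [ae_restrict_mem measurableSet_Ioo] with y hy
    rw [hH]
    exact ENNReal.mul_lt_top ENNReal.ofReal_lt_top (D.h_fin hy.1).lt_top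

end CoagData

lemma main_aux {α ε : ℝ} (hα0 : 0 < α) (hα1 : α < 1) (W : ℝ → ℝ → ℝ) (hW : GoodW α W)
    (hε : 0 < ε) (hε' : ε ≤ (1 - α) ^ 2 / (16 * ((3 + α) / (1 - α)) ^ (2 - α)))
    (φ : ℝ → ℝ) (hp : IsProfile (Kern ε W) φ) (hn : IsNormalised φ) {x : ℝ} (hx : 0 < x) :
    DifferentiableAt ℝ
      (fun t => ∫ y in Ioo 0 t, ∫ z in Ioi (t - y), y * Kern ε W y z * φ y * φ z) x := by
  obtain ⟨hloc, hnn, hxint, heq⟩ := hp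
  obtain ⟨Wc, Ws, -, Wb⟩ := hW
  have hsm : AEStronglyMeasurable φ (volume.restrict (Ioi 0)) := hloc.aestronglyMeasurable
  obtain ⟨ψ, hψ⟩ : ∃ ψ : ℝ → ℝ, ψ = fun x => max (hsm.mk φ x) 0 := ⟨_, rfl⟩
  have hψm : Measurable ψ := by
    rw [hψ]; exact hsm.stronglyMeasurable_mk.measurable.max measurable_const
  have hψ0 : ∀ x, 0 ≤ ψ x := fun x => by rw [hψ]; exact le_max_right _ _
  have hφ : φ =ᵐ[volume.restrict (Ioi 0)] ψ := by
    filter_upwards [hsm.ae_eq_mk, hnn] with x h1 h2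
    rw [hψ]
    simp only
    rw [← h1, max_eq_left h2]
  obtain ⟨ν, hν⟩ : ∃ ν : Measure ℝ,
    ν = (volume.restrict (Ioi 0)).withDensity (fun x => ENNReal.ofReal (ψ x)) := ⟨_, rfl⟩
  have : SFinite ν := by rw [hν]; infer_instance
  have : NullSingletonClass ν := by rw [hν]; infer_instance
  obtain ⟨k, hk⟩ : ∃ k : ℝ → ℝ → ℝ,
    k = fun x y => if 0 < x ∧ 0 < y then Kern ε W x y else 2 := ⟨_, rfl⟩
  have hK : ∀ y z, 0 < y → 0 < z → k y z = Kern ε W y z := by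
    intro y z hy hz
    rw [hk]; simp [hy, hz]
  have kc : ContinuousOn (fun p : ℝ × ℝ => k p.1 p.2) (Ioi 0 ×ˢ Ioi 0) := by
    have : ContinuousOn (fun p : ℝ × ℝ => 2 + ε * W p.1 p.2) (Ioi 0 ×ˢ Ioi 0) :=
      continuousOn_const.add (continuousOn_const.mul Wc)
    exact this.congr fun p hp => hK p.1 p.2 hp.1 hp.2
  have D : CoagData α ε ν k := by
    refine ⟨hα0, hα1, hε, ?_, ?_, ?_, ?_, ?_, ?_⟩
    · rw [hν]
      exact (withDensity_absolutelyContinuous _ _).ae_le (ae_restrict_mem measurableSet_Ioi)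
    · rw [CoagData.lint_nu hψm hν]
      have : ENNReal.ofReal (∫ x in Ioi (0:ℝ), x * φ x) = 1 := by
        rw [show ∫ x in Ioi (0:ℝ), x * φ x = 1 from hn]; simp
      rw [ofReal_integral_eq_lintegral_ofReal hxint] at this
      · rw [← this]
        apply lintegral_congr_ae
        filter_upwards [hφ] with x h
        rw [h, mul_comm x, ENNReal.ofReal_mul (hψ0 x)]
      · filter_upwards [hnn, ae_restrict_mem measurableSet_Ioi] with x h1 h2
        exact mul_nonneg (le_of_lt h2) h1
    · have := kc.measurable_piecewise (g := fun _ => (2:ℝ)) continuousOn_const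
        (measurableSet_Ioi.prod measurableSet_Ioi)
      convert this using 1
      funext p
      by_cases h : 0 < p.1 ∧ 0 < p.2
      · rw [piecewise_eq_of_mem _ _ _ (show p ∈ Ioi 0 ×ˢ Ioi 0 from h)]
      · rw [piecewise_eq_of_notMem _ _ _ (show p ∉ Ioi 0 ×ˢ Ioi 0 from h), hk]
        simp only [if_neg h]
    · intro x y
      rw [hk]
      by_cases h : 0 < x ∧ 0 < y
      · simp only [h.1, h.2, Kern, and_true, if_true, Ws x y h.1 h.2]
      · have h' : ¬ (0 < y ∧ 0 < x) := fun h' => h ⟨h'.2, h'.1⟩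
        simp only [if_neg h, if_neg h']
    · intro x y
      rw [hk]
      by_cases h : 0 < x ∧ 0 < y
      · simp only [if_pos h, Kern]
        have := mul_nonneg hε.le (Wb x y h.1 h.2).1
        linarith
      · simp only [if_neg h, le_refl]
    · intro x y h1 h2
      rw [hK x y h1 h2, Kern]
      have := mul_le_mul_of_nonneg_left (Wb x y h1 h2).2 hε.le
      linarith
  have hT : (fun t => ∫ y in Ioo 0 t, ∫ z in Ioi (t - y), y * Kern ε W y z * φ y * φ z) =
      fun t => (Jf ν k t).toReal := funext fun t => D.t_eq hψm hψ0 hν hφ hK t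
  rw [hT]
  have heq' : ∀ᵐ x ∂(volume.restrict (Ioi (0:ℝ))), x ^ 2 * ψ x = (Jf ν k x).toReal := by
    filter_upwards [heq, hφ] with x h1 h2
    rw [← h2, h1]
    exact congrFun hT x
  have hjf : ∀ᵐ x ∂(volume.restrict (Ioi (0:ℝ))), Jf ν k x ≠ ∞ := by
    apply D.jfin
    intro b hb hinf
    rw [hν, withDensity_apply _ measurableSet_Iio, Measure.restrict_restrict measurableSet_Iio,
      lintegral_eq_zero_iff hψm.ennreal_ofReal]
    have h1 := ae_restrict_of_ae_restrict_of_subset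
      (inter_subset_right : Iio b ∩ Ioi 0 ⊆ Ioi 0) heq'
    filter_upwards [h1, ae_restrict_mem (measurableSet_Iio.inter measurableSet_Ioi)] with y hy hy'
    have hy0 : 0 < y := hy'.2
    rw [hinf y ⟨hy'.2, hy'.1⟩] at hy
    have : ψ y = 0 := by
      rcases mul_eq_zero.1 hy with h | h
      · exact absurd h (by positivity)
      · exact h
    simp [this]
  have hg : ∀ᵐ x ∂(volume.restrict (Ioi (0:ℝ))),
      ENNReal.ofReal (x ^ 2) * ENNReal.ofReal (ψ x) = Jf ν k x := by
    filter_upwards [hjf, heq'] with x h1 h2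
    rw [← ENNReal.ofReal_mul (sq_nonneg x), h2, ENNReal.ofReal_toReal h1]
  have HE : ∀ h : ℝ → ℝ≥0∞, Measurable h →
      ∫⁻ x, ENNReal.ofReal (x ^ 2) * h x ∂ν = ∫⁻ x in Ioi 0, h x * Jf ν k x := by
    intro h _
    rw [CoagData.lint_nu hψm hν]
    apply lintegral_congr_ae
    filter_upwards [hg] with x hx
    rw [← hx]; ring
  have hν1 := D.mass_le HE
  have : IsFiniteMeasure ν := ⟨hν1.trans_lt ENNReal.one_lt_top⟩
  have h1α : 0 < 1 - α := by linarith
  have hP : 0 < (3 + α) / (1 - α) := by positivity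
  have hlow := D.mass_low hν1 HE hP
  have hQ : 0 < ((3 + α) / (1 - α)) ^ (2 - α) := rpow_pos_of_pos hP _
  obtain ⟨Q, hQd⟩ : ∃ Q, Q = ((3 + α) / (1 - α)) ^ (2 - α) := ⟨_, rfl⟩
  rw [← hQd] at hlow hQ hε'
  have hN : (1 + α) / 2 < ν.real univ := by
    refine lt_of_lt_of_le ?_ hlow
    have e1 : (3 + α) / (1 - α) / (1 + (3 + α) / (1 - α)) = (3 + α) / 4 := by
      field_simp
      ring
    have e2 : 2 * ε * Q / (1 - α) ≤ (1 - α) / 8 := by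
      rw [div_le_iff₀ h1α]
      rw [le_div_iff₀ (by positivity)] at hε'
      nlinarith
    rw [e1]
    linarith
  exact D.j_diff (D.neg_moment HE hN) kc hν hg hx

end

theorem stmt19 (α : ℝ) (hα : α ∈ Ioo (0:ℝ) 1) (W : ℝ → ℝ → ℝ) (hW : GoodW α W) :
    ∃ εstar > (0:ℝ), ∀ ε : ℝ, 0 < ε → ε ≤ εstar →
      ∀ φ : ℝ → ℝ, IsProfile (Kern ε W) φ → IsNormalised φ →
        (∀ x : ℝ, 0 < x → DifferentiableAt ℝ
          (fun t => (1 / t ^ 2) *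
            ∫ y in Ioo 0 t, ∫ z in Ioi (t - y), y * Kern ε W y z * φ y * φ z) x) ∧
        (∀ᵐ x ∂(volume.restrict (Ioi (0:ℝ))),
          (1 / x ^ 2) *
            (∫ y in Ioo 0 x, ∫ z in Ioi (x - y), y * Kern ε W y z * φ y * φ z) = φ x) := by
  have h1α : 0 < 1 - α := by linarith [hα.2]
  have hα0 := hα.1
  have hP : 0 < (3 + α) / (1 - α) := by positivity
  have hQ : 0 < ((3 + α) / (1 - α)) ^ (2 - α) := rpow_pos_of_pos hP _
  refine ⟨(1 - α) ^ 2 / (16 * ((3 + α) / (1 - α)) ^ (2 - α)), by positivity, ?_⟩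
  intro ε hε hε' φ hp hn
  refine ⟨fun x hx => ?_, ?_⟩
  · refine DifferentiableAt.fun_mul ?_ (main_aux hα.1 hα.2 W hW hε hε' φ hp hn hx)
    exact (differentiableAt_const _).div (by fun_prop) (by positivity)
  · filter_upwards [hp.2.2.2, ae_restrict_mem measurableSet_Ioi] with x h1 h2
    have hx : 0 < x := h2
    rw [← h1]
    field_simp
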